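/- arXiv:1107.0557 — 3 statements merged into one kernel-verified Lean document; each statement's English description precedes it below -/
import Mathlib

section
/- Let M be a right R-module of projective dimension at most 1. The following are equivalent: (1) M is an fp-Ω¹-module; (2) there is a projective module L such that M ⊕ L is a direct sum of an FP₂-module and a projective module; (3) Ext¹_R(M, −) commutes with direct limits; (4) Ext¹_R(M, −) commutes with direct sums of copies of R. -/
open CategoryTheory CategoryTheory.Limits Opposite

noncomputable section

/-- The category of right `R`-modules. -/
abbrev RMod (R : Type) [Ring R] := ModuleCat.{0} Rᵐᵒᵖ

/-- `R` as a right module over itself. -/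
abbrev regR (R : Type) [Ring R] : RMod R := ModuleCat.of Rᵐᵒᵖ R

/-- The covariant functor `Ext¹_R(M, -)` (more generally `Extⁿ_R(M, -)`). -/
abbrev extFun (R : Type) [Ring R] (n : ℕ) (M : RMod R) : RMod R ⥤ ModuleCat ℤ :=
  (Ext ℤ (RMod R) n).obj (op M)

/-- `Ext¹_R(M,-)` commutes with direct limits (direct systems over directed sets). -/
def CommutesWithDirectLimits (R : Type) [Ring R] (M : RMod R) : Prop :=
  ∀ (J : Type) [Preorder J] [IsDirected J (· ≤ ·)] [Nonempty J],
    PreservesColimitsOfShape J (extFun R 1 M)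

/-- `Ext¹_R(M,-)` commutes with direct sums. -/
def CommutesWithDirectSums (R : Type) [Ring R] (M : RMod R) : Prop :=
  ∀ (ι : Type), PreservesColimitsOfShape (Discrete ι) (extFun R 1 M)

/-- `Extⁿ_R(M,-)` commutes with direct sums of copies of `R`: the canonical map
`Extⁿ_R(M,R)^{(ι)} → Extⁿ_R(M,R^{(ι)})` is an isomorphism for every index set `ι`. -/
def CommutesWithSumsOfR (R : Type) [Ring R] (n : ℕ) (M : RMod R) : Prop :=
  ∀ (ι : Type), IsIso (Sigma.desc
    (fun i : ι => (extFun R n M).map (Sigma.ι (fun _ : ι => regR R) i)))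

/-- A module `K` is small iff `Hom_R(K,-)` commutes with direct sums. -/
def IsSmallModule (R : Type) [Ring R] (K : RMod R) : Prop :=
  ∀ (ι : Type), PreservesColimitsOfShape (Discrete ι) (preadditiveCoyoneda.obj (op K))

/-- `M` has a short exact sequence `0 → K → P → M → 0` with `P` projective and `K`
satisfying the property `Q` (e.g. `M` is fp-Ω¹, fg-Ω¹ or small-Ω¹). -/
def IsOmega1 (R : Type) [Ring R] (Q : RMod R → Prop) (M : RMod R) : Prop :=
  ∃ (K P : RMod R) (i : K ⟶ P) (p : P ⟶ M) (w : i ≫ p = 0),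
    Mono i ∧ Epi p ∧ (ShortComplex.mk i p w).Exact ∧ Projective P ∧ Q K

/-- `M` has projective dimension at most 1. -/
def HasProjDimLE1 (R : Type) [Ring R] (M : RMod R) : Prop :=
  ∃ (P₁ P₀ : RMod R) (f : P₁ ⟶ P₀) (p : P₀ ⟶ M) (w : f ≫ p = 0),
    Projective P₁ ∧ Projective P₀ ∧ Mono f ∧ Epi p ∧ (ShortComplex.mk f p w).Exact

/-- `M` is `FP₂`: it admits a projective resolution which is finitely generated in
dimensions `0`, `1` and `2`. -/
def IsFP2 (R : Type) [Ring R] (M : RMod R) : Prop :=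
  ∃ (P₂ P₁ P₀ : RMod R) (d₂ : P₂ ⟶ P₁) (d₁ : P₁ ⟶ P₀) (p : P₀ ⟶ M)
    (w₂ : d₂ ≫ d₁ = 0) (w₁ : d₁ ≫ p = 0),
    Projective P₂ ∧ Projective P₁ ∧ Projective P₀ ∧
    Module.Finite Rᵐᵒᵖ P₂ ∧ Module.Finite Rᵐᵒᵖ P₁ ∧ Module.Finite Rᵐᵒᵖ P₀ ∧
    Epi p ∧ (ShortComplex.mk d₂ d₁ w₂).Exact ∧ (ShortComplex.mk d₁ p w₁).Exact

/-- `M` has injective dimension at most `n`, i.e. `Ext^k(-,M)` vanishes for `k > n`. -/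
def HasInjDimLE (R : Type) [Ring R] (n : ℕ) (M : RMod R) : Prop :=
  ∀ (k : ℕ), n < k → ∀ (N : RMod R), IsZero (((Ext ℤ (RMod R) k).obj (op N)).obj M)

/-!
For a short exact sequence `0 → K → P → M → 0` with `P` projective, `Ext¹(M, -)` is the cokernel of
`Hom(P, -) → Hom(K, -)`. If `K` is finitely generated, then `K → P` extends over a finite free
module `F` mapping back to `P`, so `Hom(P, -)` may be replaced by `Hom(F, -)`, and comparing the two
pushouts of `K → P` and `K → F` gives `M ⊕ F ≅ (F / K) ⊕ P`. Conversely, if `K` is projective,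
then `K` embeds in a direct sum of copies of `R` as a direct summand; when `Ext¹(M, -)` commutes
with this sum, the class of the embedding is supported on finitely many copies, so that the
identity of `K` is the sum of a map through a finite free module `F` and a map through `P`. The
pushout of `P` along `K → F` is then projective, and presents `M` with kernel `F`.
-/

section ShortExact

universe v u

variable {C : Type u} [Category.{v} C] [Abelian C]

lemma shortExact_pushout {S : ShortComplex C} (hS : S.ShortExact) {F : C} (a : S.X₁ ⟶ F) :
    (ShortComplex.mk (pushout.inr S.f a) (pushout.desc S.g 0 (by simp))
      (pushout.inr_desc _ _ _)).ShortExact := by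
  have := hS.mono_f
  have := hS.epi_g
  have : Epi (pushout.desc S.g (0 : F ⟶ S.X₃) (by simp : S.f ≫ S.g = a ≫ 0)) :=
    epi_of_epi_fac (pushout.inl_desc _ _ _)
  refine .mk' (ShortComplex.exact_of_g_is_cokernel _ ?_) inferInstance this
  refine CokernelCofork.IsColimit.ofπ' _ _ fun {Y} k hk => ?_
  refine ⟨hS.gIsCokernel.desc (CokernelCofork.ofπ (pushout.inl S.f a ≫ k) ?_), ?_⟩
  · rw [pushout.condition_assoc, hk, comp_zero]
  · ext
    · rw [pushout.inl_desc_assoc]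
      exact hS.gIsCokernel.fac _ .one
    · rw [pushout.inr_desc_assoc, zero_comp, hk]

lemma nonempty_pushout_iso_biprod {S : ShortComplex C} (hS : S.ShortExact) {F : C}
    (t : S.X₂ ⟶ F) : Nonempty (pushout S.f (S.f ≫ t) ≅ F ⊞ S.X₃) :=
  let r : pushout S.f (S.f ≫ t) ⟶ F := pushout.desc t (𝟙 F) (Category.comp_id _).symm
  have := (shortExact_pushout hS (S.f ≫ t)).epi_g
  ⟨(ShortComplex.Splitting.ofExactOfRetraction _ (shortExact_pushout hS (S.f ≫ t)).exact r
    (pushout.inr_desc _ _ _) this).isoBinaryBiproduct⟩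

lemma shortExact_cokernel {X Y : C} (f : X ⟶ Y) [Mono f] :
    (ShortComplex.mk f (cokernel.π f) (cokernel.condition f)).ShortExact :=
  .mk' (ShortComplex.exact_cokernel f) inferInstance inferInstance

lemma nonempty_biprod_iso_of_comp_comp_eq {S : ShortComplex C} (hS : S.ShortExact) {F : C}
    {t : S.X₂ ⟶ F} {b : F ⟶ S.X₂} (h : S.f ≫ t ≫ b = S.f) :
    Nonempty (S.X₃ ⊞ F ≅ cokernel (S.f ≫ t) ⊞ S.X₂) := by
  have := hS.mono_f
  have mono_comp : Mono (S.f ≫ t) := mono_of_mono_fac (h := S.f) (by rw [Category.assoc, h])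
  obtain ⟨e⟩ := nonempty_pushout_iso_biprod hS t
  obtain ⟨e'⟩ := nonempty_pushout_iso_biprod (shortExact_cokernel (S.f ≫ t)) b
  have hb : (S.f ≫ t) ≫ b = S.f := (Category.assoc _ _ _).trans h
  let swap : pushout S.f (S.f ≫ t) ≅ pushout (S.f ≫ t) ((S.f ≫ t) ≫ b) :=
    pushoutSymmetry _ _ ≪≫ pushout.congrHom rfl hb.symm
  exact ⟨biprod.braiding _ _ ≪≫ e.symm ≪≫ swap ≪≫ e' ≪≫ biprod.braiding _ _⟩

lemma projective_pushout {K P F : C} [Projective P] [Projective F] {i : K ⟶ P} {a : K ⟶ F}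
    {b : F ⟶ K} {g : P ⟶ K} (h : a ≫ b + i ≫ g = 𝟙 K) : Projective (pushout i a) := by
  let d : K ⟶ P ⊞ F := i ≫ biprod.inl - a ≫ biprod.inr
  have d_eq : d = a ≫ b ≫ d + i ≫ g ≫ d := by
    simpa only [Preadditive.add_comp, Category.assoc, Category.id_comp] using
      congrArg (· ≫ d) h.symm
  have d_comp_desc : d ≫ biprod.desc (pushout.inl i a) (pushout.inr i a) = 0 := by
    simp [d, pushout.condition]
  have w : i ≫ (biprod.inl - g ≫ d) = a ≫ (biprod.inr + b ≫ d) := by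
    rw [Preadditive.comp_sub, Preadditive.comp_add, sub_eq_iff_eq_add, add_assoc, ← d_eq]
    simp [d]
  let retract : Retract (pushout i a) (P ⊞ F) :=
    { i := pushout.desc _ _ w
      r := biprod.desc (pushout.inl i a) (pushout.inr i a)
      retract := by
        ext
        · rw [pushout.inl_desc_assoc]
          simp [d_comp_desc]
        · rw [pushout.inr_desc_assoc]
          simp [d_comp_desc] }
  exact retract.projective

lemma shortExact_pullback {S : ShortComplex C} (hS : S.ShortExact) {Z : C} (a : Z ⟶ S.X₃) :
    (ShortComplex.mk (pullback.lift S.f 0 (by simp)) (pullback.snd S.g a)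
      (pullback.lift_snd _ _ _)).ShortExact := by
  have := hS.mono_f
  have := hS.epi_g
  have : Mono (pullback.lift S.f (0 : S.X₁ ⟶ Z) (by simp : S.f ≫ S.g = 0 ≫ a)) :=
    mono_of_mono_fac (pullback.lift_fst _ _ _)
  refine .mk' (ShortComplex.exact_of_f_is_kernel _ ?_) this inferInstance
  refine KernelFork.IsLimit.ofι' _ _ fun {Y} k hk => ?_
  refine ⟨hS.fIsKernel.lift (KernelFork.ofι (k ≫ pullback.fst S.g a) ?_), ?_⟩
  · rw [Category.assoc, pullback.condition, reassoc_of% hk, zero_comp]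
  · ext
    · rw [Category.assoc, pullback.lift_fst]
      exact hS.fIsKernel.fac _ .zero
    · rw [Category.assoc, pullback.lift_snd, comp_zero, hk]

lemma projective_pullback_biprod_inl {P M L : C} [Projective P] [Projective L] (p : P ⟶ M ⊞ L)
    [Epi p] : Projective (pullback p (biprod.inl : M ⟶ M ⊞ L)) := by
  let d : L ⟶ P := Projective.factorThru biprod.inr p
  have hd : d ≫ p = biprod.inr := Projective.factorThru_comp _ _
  let retract : Retract (pullback p (biprod.inl : M ⟶ M ⊞ L)) P :=
    { i := pullback.fst _ _
      r := pullback.lift (𝟙 P - p ≫ biprod.snd ≫ d) (p ≫ biprod.fst) (by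
        ext <;> simp [hd])
      retract := by
        ext
        · rw [Category.assoc, pullback.lift_fst, Category.id_comp, Preadditive.comp_sub,
            pullback.condition_assoc]
          simp
        · rw [Category.assoc, pullback.lift_snd, Category.id_comp, pullback.condition_assoc]
          simp }
  exact retract.projective

lemma shortExact_biprod_map_id {S : ShortComplex C} (hS : S.ShortExact) (P : C) :
    (ShortComplex.mk (S.f ≫ biprod.inl) (biprod.map S.g (𝟙 P)) (by simp)).ShortExact := by
  have := hS.mono_f
  have := hS.epi_g
  refine .mk' (ShortComplex.exact_of_f_is_kernel _ ?_) inferInstance inferInstance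
  refine KernelFork.IsLimit.ofι' _ _ fun {Y} k hk => ?_
  have fst_comp : (k ≫ biprod.fst) ≫ S.g = 0 := by simpa using congrArg (· ≫ biprod.fst) hk
  have snd_eq : k ≫ biprod.snd = 0 := by simpa using congrArg (· ≫ biprod.snd) hk
  refine ⟨hS.fIsKernel.lift (KernelFork.ofι _ fst_comp), ?_⟩
  have lift_comp : hS.fIsKernel.lift (KernelFork.ofι _ fst_comp) ≫ S.f = k ≫ biprod.fst :=
    hS.fIsKernel.fac _ .zero
  ext
  · simp [lift_comp]
  · simp [snd_eq]

end ShortExact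

section HomologyOne

universe v' u'

variable {D : Type u'} [Category.{v'} D] [Abelian D]

/-- The map `H₁(L) → K` induced by a map `q : L₁ → K` vanishing on boundaries. -/
def homologyOneDesc (L : ChainComplex D ℕ) {K : D} {q : L.X 1 ⟶ K} (hq : L.d 2 1 ≫ q = 0) :
    L.homology 1 ⟶ K :=
  L.homologyι 1 ≫ L.descOpcycles q 2 (by simp) hq

variable {L L' : ChainComplex D ℕ} {K K' : D} {q : L.X 1 ⟶ K} {q' : L'.X 1 ⟶ K'}
  (hq : L.d 2 1 ≫ q = 0) (hq' : L'.d 2 1 ≫ q' = 0)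

lemma homologyOneDesc_naturality (φ : L ⟶ L') {a : K ⟶ K'} (w : φ.f 1 ≫ q' = q ≫ a) :
    HomologicalComplex.homologyMap φ 1 ≫ homologyOneDesc L' hq' = homologyOneDesc L hq ≫ a := by
  have : HomologicalComplex.opcyclesMap φ 1 ≫ L'.descOpcycles q' 2 (by simp) hq' =
      L.descOpcycles q 2 (by simp) hq ≫ a := by
    simp [← cancel_epi (L.pOpcycles 1), w]
  simp [homologyOneDesc, this]

lemma homologyOneDesc_comp {i : K ⟶ L.X 0} (hi : q ≫ i = L.d 1 0) :
    homologyOneDesc L hq ≫ i = 0 := by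
  have : L.descOpcycles q 2 (by simp) hq ≫ i = L.fromOpcycles 1 0 := by
    simp [← cancel_epi (L.pOpcycles 1), hi]
  simp [homologyOneDesc, this]

lemma exact_and_mono_homologyOneDesc (hcoker : IsColimit (CokernelCofork.ofπ q hq))
    {i : K ⟶ L.X 0} (hi : q ≫ i = L.d 1 0) :
    (ShortComplex.mk _ _ (homologyOneDesc_comp hq hi)).Exact ∧ Mono (homologyOneDesc L hq) := by
  let e : L.opcycles 1 ≅ K :=
    (L.opcyclesIsCokernel 2 1 (by simp)).coconePointUniqueUpToIso hcoker
  have p_comp_e : L.pOpcycles 1 ≫ e.hom = q :=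
    (L.opcyclesIsCokernel 2 1 (by simp)).comp_coconePointUniqueUpToIso_hom hcoker .one
  have e_hom : e.hom = L.descOpcycles q 2 (by simp) hq := by
    simp [← cancel_epi (L.pOpcycles 1), p_comp_e]
  let iso : ShortComplex.mk _ _ (L.homologyι_comp_fromOpcycles 1 0) ≅
      ShortComplex.mk _ _ (homologyOneDesc_comp hq hi) :=
    ShortComplex.isoMk (Iso.refl _) e (Iso.refl _) (by simp [homologyOneDesc, e_hom])
      (by simp [← cancel_epi (L.pOpcycles 1), reassoc_of% p_comp_e, hi])
  exact (ShortComplex.exact_and_mono_f_iff_of_iso iso).1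
    ((ShortComplex.exact_and_mono_f_iff_f_is_kernel _).2 ⟨L.homologyIsKernel 1 0 (by simp)⟩)

end HomologyOne

section LeftDerived

universe v u v' u'

variable {C : Type u} [Category.{v} C] [Abelian C]
  {D : Type u'} [Category.{v'} D] [Abelian D]
  {Z K : C} (P : ProjectiveResolution Z) {q : P.complex.X 1 ⟶ K} (hq : P.complex.d 2 1 ≫ q = 0)

include hq in
lemma map_d_comp_map (F : C ⥤ D) [F.Additive] :
    ((F.mapHomologicalComplex _).obj P.complex).d 2 1 ≫ F.map q = 0 :=
  (F.map_comp _ _).symm.trans (by rw [hq, F.map_zero]; rfl)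

variable [HasProjectiveResolutions C]

/-- The map `(L₁F)(Z) → F(K)` induced by a map `q : P₁ → K` vanishing on boundaries, for a
projective resolution `P` of `Z`; it is the connecting map when `K` is the first syzygy of `P`. -/
def leftDerivedOneToSyzygy (F : C ⥤ D) [F.Additive] : (F.leftDerived 1).obj Z ⟶ F.obj K :=
  (P.isoLeftDerivedObj F 1).hom ≫ homologyOneDesc _ (map_d_comp_map P hq F)

lemma leftDerivedOneToSyzygy_naturality {F G : C ⥤ D} [F.Additive] [G.Additive] (α : F ⟶ G) :
    (NatTrans.leftDerived α 1).app Z ≫ leftDerivedOneToSyzygy P hq G =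
      leftDerivedOneToSyzygy P hq F ≫ α.app K := by
  have homology_naturality := homologyOneDesc_naturality (map_d_comp_map P hq F)
    (map_d_comp_map P hq G) ((NatTrans.mapHomologicalComplex α _).app P.complex)
    (α.naturality q).symm
  rw [P.leftDerived_app_eq α 1, Category.assoc, Category.assoc]
  refine (congrArg ((P.isoLeftDerivedObj F 1).hom ≫ ·) ?_).trans (Category.assoc _ _ _).symm
  exact (congrArg (_ ≫ ·) (Iso.inv_hom_id_assoc _ _)).trans homology_naturality

variable {i : K ⟶ P.complex.X 0} (hi : q ≫ i = P.complex.d 1 0)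

include hi in
lemma leftDerivedOneToSyzygy_comp_map (F : C ⥤ D) [F.Additive] :
    leftDerivedOneToSyzygy P hq F ≫ F.map i = 0 :=
  (Category.assoc _ _ _).trans <| (congrArg (_ ≫ ·) (homologyOneDesc_comp (map_d_comp_map P hq F)
    ((F.map_comp q i).symm.trans (congrArg F.map hi)))).trans comp_zero

lemma exact_and_mono_leftDerivedOneToSyzygy (hcoker : IsColimit (CokernelCofork.ofπ q hq))
    (F : C ⥤ D) [F.Additive] [PreservesFiniteColimits F] :
    (ShortComplex.mk _ _ (leftDerivedOneToSyzygy_comp_map P hq hi F)).Exact ∧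
      Mono (leftDerivedOneToSyzygy P hq F) := by
  have map_hi : F.map q ≫ F.map i = ((F.mapHomologicalComplex _).obj P.complex).d 1 0 :=
    (F.map_comp q i).symm.trans (congrArg F.map hi)
  let iso : ShortComplex.mk _ _ (leftDerivedOneToSyzygy_comp_map P hq hi F) ≅
      ShortComplex.mk _ _ (homologyOneDesc_comp (map_d_comp_map P hq F) map_hi) :=
    ShortComplex.isoMk (P.isoLeftDerivedObj F 1) (Iso.refl _) (Iso.refl _) (Category.comp_id _).symm
      ((Category.id_comp _).trans (Category.comp_id _).symm)
  exact (ShortComplex.exact_and_mono_f_iff_of_iso iso).2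
    (exact_and_mono_homologyOneDesc (map_d_comp_map P hq F)
      (CokernelCofork.mapIsColimit _ hcoker F) map_hi)

end LeftDerived

section Splice

universe v u

variable {C : Type u} [Category.{v} C] [Abelian C] {S : ShortComplex C}

/-- The augmentation `Q₀ → Z` of a projective resolution `Q` of `Z`, with target `Z` itself instead
of the degree-zero term of the complex concentrated in degree zero. -/
def resolutionAugmentation {Z : C} (Q : ProjectiveResolution Z) : Q.complex.X 0 ⟶ Z :=
  Q.π.f 0

lemma d_comp_resolutionAugmentation {Z : C} (Q : ProjectiveResolution Z) :
    Q.complex.d 1 0 ≫ resolutionAugmentation Q = 0 :=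
  Q.complex_d_comp_π_f_zero

lemma exact_resolutionAugmentation {Z : C} (Q : ProjectiveResolution Z) :
    (ShortComplex.mk _ _ (d_comp_resolutionAugmentation Q)).Exact :=
  Q.exact₀

instance epi_resolutionAugmentation {Z : C} (Q : ProjectiveResolution Z) :
    Epi (resolutionAugmentation Q) :=
  inferInstanceAs (Epi (Q.π.f 0))

/-- The complex `⋯ → Q₁ → Q₀ → X₂` obtained by splicing a projective resolution `Q` of `X₁` with
`X₁ → X₂`. -/
def spliceComplex (S : ShortComplex C) (Q : ProjectiveResolution S.X₁) : ChainComplex C ℕ :=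
  Q.complex.augment (resolutionAugmentation Q ≫ S.f)
    (by rw [reassoc_of% d_comp_resolutionAugmentation Q, zero_comp])

instance projective_spliceComplex_X [Projective S.X₂] (Q : ProjectiveResolution S.X₁) (n : ℕ) :
    Projective ((spliceComplex S Q).X n) :=
  match n with
  | 0 => ‹Projective S.X₂›
  | n + 1 => Q.projective n

lemma augmentation_comp_comp (S : ShortComplex C) (Q : ProjectiveResolution S.X₁) :
    (resolutionAugmentation Q ≫ S.f) ≫ S.g = 0 := by
  simp

lemma exact_spliceComplex_zero (hS : S.ShortExact) (Q : ProjectiveResolution S.X₁) :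
    (ShortComplex.mk _ _ (augmentation_comp_comp S Q)).Exact := by
  let φ : ShortComplex.mk _ _ (augmentation_comp_comp S Q) ⟶ S :=
    { τ₁ := resolutionAugmentation Q, τ₂ := 𝟙 _, τ₃ := 𝟙 _ }
  exact (ShortComplex.exact_iff_of_epi_of_isIso_of_mono φ).2 hS.exact

lemma exactAt_spliceComplex_succ (hS : S.ShortExact) (Q : ProjectiveResolution S.X₁) (n : ℕ) :
    (spliceComplex S Q).ExactAt (n + 1) := by
  have := hS.mono_f
  rw [HomologicalComplex.exactAt_iff' _ (n + 2) (n + 1) n (by simp) (by simp)]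
  match n with
  | 0 =>
    let φ : ShortComplex.mk _ _ (d_comp_resolutionAugmentation Q) ⟶
        ShortComplex.mk (Q.complex.d 1 0) (resolutionAugmentation Q ≫ S.f)
          (by rw [reassoc_of% d_comp_resolutionAugmentation Q, zero_comp]) :=
      { τ₁ := 𝟙 _, τ₂ := 𝟙 _, τ₃ := S.f }
    exact (ShortComplex.exact_iff_of_epi_of_isIso_of_mono φ).1 (exact_resolutionAugmentation Q)
  | n + 1 => exact Q.exact_succ n

/-- The splice of a projective resolution of `X₁` with `0 → X₁ → X₂ → X₃ → 0`, as a projective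
resolution of `X₃` when `X₂` is projective. -/
def splicedResolution (hS : S.ShortExact) [Projective S.X₂] (Q : ProjectiveResolution S.X₁) :
    ProjectiveResolution S.X₃ where
  complex := spliceComplex S Q
  π := (ChainComplex.toSingle₀Equiv (spliceComplex S Q) S.X₃).symm
    ⟨S.g, augmentation_comp_comp S Q⟩
  quasiIso := ⟨fun n => by
    match n with
    | 0 =>
      have h_π : ((ChainComplex.toSingle₀Equiv (spliceComplex S Q) S.X₃).symm
          ⟨S.g, augmentation_comp_comp S Q⟩).f 0 = S.g :=
        ChainComplex.toSingle₀Equiv_symm_apply_f_zero _ _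
      rw [ChainComplex.quasiIsoAt₀_iff, ShortComplex.quasiIso_iff_of_zeros' _ rfl rfl rfl]
      refine (ShortComplex.exact_and_epi_g_iff_of_iso ?_).2
        ⟨exact_spliceComplex_zero hS Q, hS.epi_g⟩
      exact ShortComplex.isoMk (Iso.refl _) (Iso.refl _) (Iso.refl _)
        ((Category.id_comp _).trans (Category.comp_id _).symm)
        ((Category.id_comp _).trans (h_π.symm.trans (Category.comp_id _).symm))
    | n + 1 =>
      rw [quasiIsoAt_iff_exactAt' _ _ (ChainComplex.exactAt_succ_single_obj _ _)]
      exact exactAt_spliceComplex_succ hS Q n⟩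

end Splice

section Ext

universe w v u

variable {R : Type w} [Ring R] {C : Type u} [Category.{v} C] [Abelian C] [Linear R C]

instance preservesLimits_linearYoneda_obj (N : C) : PreservesLimits ((linearYoneda R C).obj N) :=
  have : PreservesLimits ((linearYoneda R C).obj N ⋙ forget (ModuleCat.{v} R)) :=
    inferInstanceAs (PreservesLimits (yoneda.obj N))
  preservesLimits_of_reflects_of_preserves _ (forget (ModuleCat.{v} R))

variable [EnoughProjectives C] {S : ShortComplex C} (hS : S.ShortExact) [Projective S.X₂]

variable (R) in
/-- The connecting map `Hom(X₁, -) → Ext¹(X₃, -)` of a short exact sequence `0 → X₁ → X₂ → X₃ → 0`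
with `X₂` projective. As `Ext` is a derived functor of its first variable, it is computed in the
opposite of the category of modules, on the resolution of `X₃` spliced from one of `X₁`. -/
def extConnecting : (linearCoyoneda R C).obj (op S.X₁) ⟶ (Ext R C 1).obj (op S.X₃) where
  app N := (leftDerivedOneToSyzygy (splicedResolution hS (projectiveResolution S.X₁))
    (d_comp_resolutionAugmentation _) ((linearYoneda R C).obj N).rightOp).unop
  naturality _ _ f := (congrArg Quiver.Hom.unop
    (leftDerivedOneToSyzygy_naturality (splicedResolution hS (projectiveResolution S.X₁))
    (d_comp_resolutionAugmentation _) (NatTrans.rightOp ((linearYoneda R C).map f)))).symm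

lemma map_comp_extConnecting_app (N : C) :
    ((linearCoyoneda R C).map S.f.op).app N ≫ (extConnecting R hS).app N = 0 :=
  congrArg Quiver.Hom.unop (leftDerivedOneToSyzygy_comp_map
    (splicedResolution hS (projectiveResolution S.X₁)) (d_comp_resolutionAugmentation _) (i := S.f)
    rfl ((linearYoneda R C).obj N).rightOp)

lemma exact_and_epi_extConnecting_app (N : C) :
    (ShortComplex.mk _ _ (map_comp_extConnecting_app (R := R) hS N)).Exact ∧
      Epi ((extConnecting R hS).app N) := by
  have : PreservesFiniteLimits ((linearYoneda R C).obj N) := inferInstance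
  have := preservesFiniteColimits_rightOp ((linearYoneda R C).obj N)
  obtain ⟨exact, mono⟩ := exact_and_mono_leftDerivedOneToSyzygy
    (splicedResolution hS (projectiveResolution S.X₁)) (d_comp_resolutionAugmentation _)
    (i := S.f) rfl (exact_resolutionAugmentation _).gIsCokernel ((linearYoneda R C).obj N).rightOp
  exact ⟨exact.unop, unop_epi_of_mono (leftDerivedOneToSyzygy
    (splicedResolution hS (projectiveResolution S.X₁)) (d_comp_resolutionAugmentation _)
    ((linearYoneda R C).obj N).rightOp)⟩

lemma extConnecting_app_surjective (N : C) :
    Function.Surjective ((extConnecting R hS).app N) :=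
  (ModuleCat.epi_iff_surjective _).1 (exact_and_epi_extConnecting_app hS N).2

lemma extConnecting_app_eq_zero_iff {N : C} (f : S.X₁ ⟶ N) :
    (extConnecting R hS).app N f = 0 ↔ ∃ h : S.X₂ ⟶ N, S.f ≫ h = f :=
  (ShortComplex.ShortExact.moduleCat_exact_iff_function_exact _).1
    (exact_and_epi_extConnecting_app hS N).1 f

end Ext

section CokernelPreserves

universe v u v' u' v'' u''

variable {J : Type u''} [Category.{v''} J] {C : Type u} [Category.{v} C]
  {V : Type u'} [Category.{v'} V] [HasZeroMorphisms V] {F G E : C ⥤ V} {α : F ⟶ G} {β : G ⟶ E}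

lemma preservesColimitsOfShape_of_isColimit_cokernelCofork {w : ∀ X, α.app X ≫ β.app X = 0}
    (hβ : ∀ X, IsColimit (CokernelCofork.ofπ (β.app X) (w X)))
    [PreservesColimitsOfShape J F] [PreservesColimitsOfShape J G] :
    PreservesColimitsOfShape J E where
  preservesColimit {D} := ⟨fun {c} hc => ⟨by
    have epi_β (X : C) : Epi (β.app X) := epi_of_isColimit_cofork (hβ X)
    have α_nat (j : J) : F.map (c.ι.app j) ≫ α.app c.pt = α.app (D.obj j) ≫ G.map (c.ι.app j) :=
      α.naturality _
    have β_nat (j : J) : G.map (c.ι.app j) ≫ β.app c.pt = β.app (D.obj j) ≫ E.map (c.ι.app j) :=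
      β.naturality _
    have hF := isColimitOfPreserves F hc
    have hG := isColimitOfPreserves G hc
    let k (s : Cocone (D ⋙ E)) : G.obj c.pt ⟶ s.pt :=
      hG.desc ((Cocone.precompose (Functor.whiskerLeft D β)).obj s)
    have ι_comp_k (s : Cocone (D ⋙ E)) (j : J) :
        G.map (c.ι.app j) ≫ k s = β.app (D.obj j) ≫ s.ι.app j := hG.fac _ j
    have α_comp_k (s : Cocone (D ⋙ E)) : α.app c.pt ≫ k s = 0 := hF.hom_ext fun j => by
      calc F.map (c.ι.app j) ≫ α.app c.pt ≫ k s
          = α.app (D.obj j) ≫ β.app (D.obj j) ≫ s.ι.app j := by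
            rw [reassoc_of% α_nat, ι_comp_k]
        _ = F.map (c.ι.app j) ≫ 0 := by rw [reassoc_of% w, zero_comp, comp_zero]
    have β_comp_desc (s : Cocone (D ⋙ E)) :
        β.app c.pt ≫ (hβ c.pt).desc (CokernelCofork.ofπ (k s) (α_comp_k s)) = k s :=
      (hβ c.pt).fac _ .one
    exact
      { desc := fun s => (hβ c.pt).desc (CokernelCofork.ofπ (k s) (α_comp_k s))
        fac := fun s j => by
          change E.map (c.ι.app j) ≫ _ = _
          rw [← cancel_epi (β.app (D.obj j)), ← reassoc_of% β_nat, β_comp_desc, ι_comp_k]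
        uniq := fun s m hm => by
          rw [← cancel_epi (β.app c.pt), β_comp_desc]
          refine hG.hom_ext fun j => ?_
          change G.map (c.ι.app j) ≫ _ = G.map (c.ι.app j) ≫ _
          rw [ι_comp_k, reassoc_of% β_nat, ← hm j]
          rfl }⟩⟩

end CokernelPreserves

section FinitelyPresentable

universe u

variable {A : Type u} [Ring A]

attribute [local instance] Cardinal.fact_isRegular_aleph0

instance isFinitelyPresentable_free_obj (X : Type u) [Finite X] :
    IsFinitelyPresentable.{u} ((ModuleCat.free A).obj X) :=
  have := (hasCardinalLT_of_finite X Cardinal.aleph0 le_rfl).isCardinalPresentable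
  have : (forget (ModuleCat.{u} A)).IsCardinalAccessible Cardinal.aleph0 :=
    Functor.isFinitelyAccessible_iff_preservesFilteredColimits.2 inferInstance
  (ModuleCat.adj A).isCardinalPresentable_leftAdjoint_obj _ X

lemma isFinitelyPresentable_of_finitePresentation (K : ModuleCat.{u} A)
    [Module.FinitePresentation A K] : IsFinitelyPresentable.{u} K := by
  obtain ⟨s, hs, t, ht⟩ := ‹Module.FinitePresentation A K›
  let p : (s →₀ A) →ₗ[A] K := Finsupp.linearCombination A Subtype.val
  let d : (t →₀ A) →ₗ[A] (s →₀ A) := Finsupp.linearCombination A Subtype.val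
  have range_p : LinearMap.range p = ⊤ := by
    rw [Finsupp.range_linearCombination, Subtype.range_val]
    exact hs
  have range_d : LinearMap.range d = LinearMap.ker p := by
    rw [Finsupp.range_linearCombination, Subtype.range_val]
    exact ht
  let S : ShortComplex (ModuleCat.{u} A) :=
    .mk (X₁ := (ModuleCat.free A).obj t) (X₂ := (ModuleCat.free A).obj s) (ModuleCat.ofHom d)
      (ModuleCat.ofHom p) (ModuleCat.hom_ext (LinearMap.range_le_ker_iff.1 range_d.le))
  have exact : S.Exact :=
    (ShortComplex.ShortExact.moduleCat_exact_iff_function_exact _).2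
      (LinearMap.exact_iff.2 range_d.symm)
  have : Epi S.g := (ModuleCat.epi_iff_surjective _).2 (LinearMap.range_eq_top.1 range_p)
  have (j : WalkingParallelPair) :
      IsCardinalPresentable ((parallelPair S.f 0).obj j) Cardinal.aleph0.{u} := by
    cases j <;> exact isFinitelyPresentable_free_obj _
  exact isCardinalPresentable_of_isColimit _ exact.gIsCokernel Cardinal.aleph0.{u}
    (hasCardinalLT_of_finite _ _ le_rfl)

lemma preservesFilteredColimits_linearCoyoneda (k : Type u) [Ring k] {C : Type*} [Category.{u} C]
    [Preadditive C] [Linear k C] (K : C) [IsFinitelyPresentable.{u} K] :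
    PreservesFilteredColimitsOfSize.{u, u} ((linearCoyoneda k C).obj (op K)) :=
  ⟨fun J _ _ =>
    have : PreservesColimitsOfShape J
        ((linearCoyoneda k C).obj (op K) ⋙ forget (ModuleCat.{u} k)) :=
      inferInstanceAs (PreservesColimitsOfShape J (coyoneda.obj (op K)))
    preservesColimitsOfShape_of_reflects_of_preserves _ (forget (ModuleCat.{u} k))⟩

end FinitelyPresentable

section FiniteSubcoproducts

open CoproductsFromFiniteFiltered

universe w v u v' u'

variable {C : Type u} [Category.{v} C] {ι : Type w}

/-- A cofan whose finite subcofans are coproducts, and which is the colimit of these finite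
coproducts, is a coproduct. -/
def isColimitCofanMkOfFinset {X : ι → C} {L : Finset (Discrete ι) ⥤ C}
    {inc : ∀ (T : Finset (Discrete ι)) (j : T), X j.1.as ⟶ L.obj T}
    (inc_map : ∀ {T T' : Finset (Discrete ι)} (u : T ⟶ T') (j : T),
      inc T j ≫ L.map u = inc T' ⟨j, u.le j.2⟩)
    (hinc : ∀ T, IsColimit (Cofan.mk (L.obj T) (inc T))) {c : Cocone L} (hc : IsColimit c)
    {g : ∀ j, X j ⟶ c.pt} (inc_comp_ι : ∀ T j, inc T j ≫ c.ι.app T = g j.1.as) :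
    IsColimit (Cofan.mk c.pt g) :=
  let desc (t : Cofan X) (T : Finset (Discrete ι)) : L.obj T ⟶ t.pt :=
    Cofan.IsColimit.desc (hinc T) fun j => t.inj j.1.as
  have inc_desc (t) (T : Finset (Discrete ι)) (j : T) : inc T j ≫ desc t T = t.inj j.1.as :=
    Cofan.IsColimit.fac (hinc T) _ j
  let s (t : Cofan X) : Cocone L :=
    { pt := t.pt
      ι.app := desc t
      ι.naturality := fun T T' u => Cofan.IsColimit.hom_ext (hinc T) _ _ fun j => by
        change inc T j ≫ L.map u ≫ desc t T' = inc T j ≫ desc t T ≫ 𝟙 _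
        rw [reassoc_of% @inc_map, inc_desc, Category.comp_id, inc_desc] }
  Cofan.IsColimit.mk _ (fun t => hc.desc (s t))
    (fun t j => by
      let T : Finset (Discrete ι) := {⟨j⟩}
      let j' : T := ⟨⟨j⟩, Finset.mem_singleton_self _⟩
      calc g j ≫ hc.desc (s t)
          = inc T j' ≫ c.ι.app T ≫ hc.desc (s t) := by rw [reassoc_of% inc_comp_ι]
        _ = inc T j' ≫ desc t T := congrArg (_ ≫ ·) (hc.fac (s t) T)
        _ = t.inj j := inc_desc t T j')
    (fun t m hm => hc.uniq (s t) m fun T => Cofan.IsColimit.hom_ext (hinc T) _ _ fun j => by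
      change inc T j ≫ c.ι.app T ≫ m = inc T j ≫ desc t T
      rw [inc_desc, reassoc_of% inc_comp_ι]
      exact hm j.1.as)

variable {D : Type u'} [Category.{v'} D] [HasFiniteCoproducts C]
  [HasColimitsOfShape (Finset (Discrete ι)) C]

lemma preservesCoproduct_of_preservesColimitsOfShape_finset (E : C ⥤ D)
    [PreservesFiniteCoproducts E] [PreservesColimitsOfShape (Finset (Discrete ι)) E] (X : ι → C)
    [HasCoproduct X] :
    PreservesColimit (Discrete.functor X) E := by
  let L := liftToFinsetObj (Discrete.functor X)
  let inc (T : Finset (Discrete ι)) (j : T) : E.obj (X j.1.as) ⟶ (L ⋙ E).obj T :=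
    E.map (Sigma.ι (fun j : T => (Discrete.functor X).obj j) j)
  have hinc (T : Finset (Discrete ι)) : IsColimit (Cofan.mk ((L ⋙ E).obj T) (inc T)) :=
    isColimitOfHasCoproductOfPreservesColimit E _
  exact preservesColimit_of_preserves_colimit_cocone (coproductIsCoproduct X)
    ((isColimitMapCoconeCofanMkEquiv _ _ _).symm (isColimitCofanMkOfFinset
      (fun _ _ => (E.map_comp _ _).symm.trans (congrArg E.map (Sigma.ι_desc _ _))) hinc
      (isColimitOfPreserves E (isColimitFiniteSubproductsCocone X))
      fun _ _ => (E.map_comp _ _).symm.trans (congrArg E.map (Sigma.ι_desc _ _))))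

end FiniteSubcoproducts

lemma functor_additive_of_forall_epi_app {C D : Type*} [Category* C] [Category* D] [Preadditive C]
    [Preadditive D] {F G : C ⥤ D} [F.Additive] (α : F ⟶ G) [∀ X, Epi (α.app X)] : G.Additive where
  map_add {X Y f g} := by
    rw [← cancel_epi (α.app X), Preadditive.comp_add, ← α.naturality, ← α.naturality,
      ← α.naturality, F.map_add, Preadditive.add_comp]

section FiniteFree

universe u

lemma exists_comp_comp_eq_self_of_finite {A : Type u} [Ring A] {K P : ModuleCat.{u} A}
    [Module.Finite A K] [Projective P] (i : K ⟶ P) :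
    ∃ (F : ModuleCat.{u} A) (t : P ⟶ F) (b : F ⟶ P),
      Module.Finite A F ∧ Projective F ∧ i ≫ t ≫ b = i := by
  classical
  have := (IsProjective.iff_projective (R := A) P).2 ‹Projective P›
  obtain ⟨s, hs⟩ := Module.projective_def'.1 this
  obtain ⟨T, hT⟩ := ‹Module.Finite A K›.fg_top
  let J : Finset P := T.biUnion fun x => (s (i x)).support
  let t : P →ₗ[A] (J →₀ A) := Finsupp.lsubtypeDomain (J : Set P) ∘ₗ s
  let b : (J →₀ A) →ₗ[A] P := Finsupp.linearCombination A Subtype.val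
  refine ⟨ModuleCat.of A (J →₀ A), ModuleCat.ofHom t, ModuleCat.ofHom b,
    inferInstanceAs (Module.Finite A (J →₀ A)), ModuleCat.projective_of_categoryTheory_projective _,
    ModuleCat.hom_ext (LinearMap.ext_on hT fun x hx => ?_)⟩
  have support_subset : (s (i x)).support ⊆ J :=
    Finset.subset_biUnion_of_mem (fun x => (s (i x)).support) hx
  calc Finsupp.linearCombination A Subtype.val ((s (i x)).subtypeDomain (· ∈ (J : Set P)))
      = Finsupp.linearCombination A id (s (i x)) := by
        simp only [Finsupp.linearCombination_apply, id_eq]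
        exact Finsupp.sum_subtypeDomain_index (h := fun y c => c • y) support_subset
    _ = i x := LinearMap.congr_fun hs (i x)

end FiniteFree

section Omega

variable {R : Type} [Ring R]

lemma isOmega1_iff_exists_shortExact {Q : RMod R → Prop} {M : RMod R} :
    IsOmega1 R Q M ↔ ∃ (S : ShortComplex (RMod R)) (_ : S.X₃ ≅ M),
      S.ShortExact ∧ Projective S.X₂ ∧ Q S.X₁ := by
  constructor
  · rintro ⟨K, P, i, p, w, mono, epi, exact, hP, hK⟩
    exact ⟨.mk i p w, Iso.refl _, .mk' exact mono epi, hP, hK⟩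
  · rintro ⟨S, e, hS, hP, hK⟩
    have := hS.mono_f
    have := hS.epi_g
    have w : S.f ≫ S.g ≫ e.hom = 0 := by simp
    let iso : S ≅ .mk S.f (S.g ≫ e.hom) w := ShortComplex.isoMk (Iso.refl _) (Iso.refl _) e
    exact ⟨_, _, S.f, S.g ≫ e.hom, w, inferInstance, inferInstance,
      ShortComplex.exact_of_iso iso hS.exact, hP, hK⟩

lemma IsOmega1.biprod_projective {Q : RMod R → Prop} {M : RMod R} (hM : IsOmega1 R Q M)
    (P : RMod R) [Projective P] : IsOmega1 R Q (M ⊞ P) := by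
  obtain ⟨S, e, hS, hP, hK⟩ := isOmega1_iff_exists_shortExact.1 hM
  exact isOmega1_iff_exists_shortExact.2 ⟨_, biprod.mapIso e (Iso.refl P),
    shortExact_biprod_map_id hS P, inferInstanceAs (Projective (S.X₂ ⊞ P)), hK⟩

lemma IsOmega1.of_iso {Q : RMod R → Prop} {M N : RMod R} (hM : IsOmega1 R Q M) (e : M ≅ N) :
    IsOmega1 R Q N := by
  obtain ⟨S, e', hS⟩ := isOmega1_iff_exists_shortExact.1 hM
  exact isOmega1_iff_exists_shortExact.2 ⟨S, e' ≪≫ e, hS⟩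

lemma IsOmega1.of_biprod_projective {Q : RMod R → Prop} {M L : RMod R} [Projective L]
    (h : IsOmega1 R Q (M ⊞ L)) : IsOmega1 R Q M := by
  obtain ⟨K, P, i, p, w, mono, epi, exact, hP, hK⟩ := h
  have hS : (ShortComplex.mk i p w).ShortExact := .mk' exact mono epi
  exact isOmega1_iff_exists_shortExact.2 ⟨_, Iso.refl _, shortExact_pullback hS biprod.inl,
    projective_pullback_biprod_inl p, hK⟩

lemma isFP2_of_shortExact {S : ShortComplex (RMod R)} (hS : S.ShortExact)
    (hK : Module.FinitePresentation Rᵐᵒᵖ S.X₁) (hP : Projective S.X₂)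
    (hF : Module.Finite Rᵐᵒᵖ S.X₂) : IsFP2 R S.X₃ := by
  have := hS.mono_f
  obtain ⟨n, m, f, g, hf, hgf⟩ := Module.FinitePresentation.exists_fin' Rᵐᵒᵖ S.X₁
  have : Epi (ModuleCat.ofHom f) := (ModuleCat.epi_iff_surjective _).2 hf
  have w : ModuleCat.ofHom g ≫ ModuleCat.ofHom f = 0 :=
    ModuleCat.hom_ext hgf.linearMap_comp_eq_zero
  have exact_fin : (ShortComplex.mk _ _ w).Exact :=
    (ShortComplex.ShortExact.moduleCat_exact_iff_function_exact _).2 hgf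
  let φ : ShortComplex.mk _ _ w ⟶
      ShortComplex.mk (ModuleCat.ofHom g) (ModuleCat.ofHom f ≫ S.f)
        (by rw [reassoc_of% w, zero_comp]) :=
    { τ₁ := 𝟙 _, τ₂ := 𝟙 _, τ₃ := S.f }
  let ψ : ShortComplex.mk (ModuleCat.ofHom f ≫ S.f) S.g (by simp) ⟶ S :=
    { τ₁ := ModuleCat.ofHom f, τ₂ := 𝟙 _, τ₃ := 𝟙 _ }
  exact ⟨_, _, _, _, _, _, _, _, ModuleCat.projective_of_categoryTheory_projective _,
    ModuleCat.projective_of_categoryTheory_projective _, hP,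
    inferInstanceAs (Module.Finite Rᵐᵒᵖ (Fin m → Rᵐᵒᵖ)),
    inferInstanceAs (Module.Finite Rᵐᵒᵖ (Fin n → Rᵐᵒᵖ)), hF, hS.epi_g,
    (ShortComplex.exact_iff_of_epi_of_isIso_of_mono φ).1 exact_fin,
    (ShortComplex.exact_iff_of_epi_of_isIso_of_mono ψ).2 hS.exact⟩

lemma IsFP2.isOmega1_finitePresentation {H : RMod R} (hH : IsFP2 R H) :
    IsOmega1 R (fun K => Module.FinitePresentation Rᵐᵒᵖ K) H := by
  obtain ⟨P₂, P₁, P₀, d₂, d₁, p, w₂, w₁, -, proj₁, proj₀, fin₂, fin₁, -, epi, exact₁, exact₀⟩ := hH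
  have exact_iff {S : ShortComplex (RMod R)} : S.Exact ↔ Function.Exact S.f.hom S.g.hom :=
    ShortComplex.ShortExact.moduleCat_exact_iff_function_exact S
  have ker_d₁ := (exact_iff.1 exact₁).linearMap_ker_eq
  have ker_p := (exact_iff.1 exact₀).linearMap_ker_eq
  have := (IsProjective.iff_projective _).2 proj₁
  have := Module.finitePresentation_of_projective Rᵐᵒᵖ P₁
  have finitePresentation_range : Module.FinitePresentation Rᵐᵒᵖ (LinearMap.range d₁.hom) := by
    refine Module.finitePresentation_of_surjective _ d₁.hom.surjective_rangeRestrict ?_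
    rw [LinearMap.ker_rangeRestrict, ker_d₁, LinearMap.range_eq_map]
    exact fin₂.fg_top.map _
  have exact_range : Function.Exact (LinearMap.range d₁.hom).subtype p.hom :=
    LinearMap.exact_iff.2 (ker_p.trans (Submodule.range_subtype _).symm)
  let S : ShortComplex (RMod R) := .mk (ModuleCat.ofHom (LinearMap.range d₁.hom).subtype) p
    (ModuleCat.hom_ext exact_range.linearMap_comp_eq_zero)
  have hS : S.ShortExact := .mk' (exact_iff.2 exact_range)
    ((ModuleCat.mono_iff_injective _).2 (Submodule.subtype_injective _)) epi
  exact isOmega1_iff_exists_shortExact.2 ⟨S, Iso.refl _, hS, proj₀, finitePresentation_range⟩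

lemma IsOmega1.exists_biprod_iso {M : RMod R}
    (hM : IsOmega1 R (fun K => Module.FinitePresentation Rᵐᵒᵖ K) M) :
    ∃ (L H P : RMod R), Projective L ∧ IsFP2 R H ∧ Projective P ∧ Nonempty (M ⊞ L ≅ H ⊞ P) := by
  obtain ⟨S, e, hS, hP, hK⟩ := isOmega1_iff_exists_shortExact.1 hM
  have := hS.mono_f
  obtain ⟨F, t, b, finite_F, hF, comp_eq⟩ := exists_comp_comp_eq_self_of_finite S.f
  have mono_comp : Mono (S.f ≫ t) := mono_of_mono_fac (h := S.f) (by rw [Category.assoc, comp_eq])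
  obtain ⟨e'⟩ := nonempty_biprod_iso_of_comp_comp_eq hS comp_eq
  have isFP2_cokernel : IsFP2 R (cokernel (S.f ≫ t)) :=
    isFP2_of_shortExact (shortExact_cokernel (S.f ≫ t)) hK hF finite_F
  exact ⟨F, cokernel (S.f ≫ t), S.X₂, hF, isFP2_cokernel, hP,
    ⟨(biprod.mapIso e (Iso.refl F)).symm ≪≫ e'⟩⟩

lemma isOmega1_finitePresentation_iff_exists_biprod_iso {M : RMod R} :
    IsOmega1 R (fun K => Module.FinitePresentation Rᵐᵒᵖ K) M ↔
      ∃ (L H P : RMod R), Projective L ∧ IsFP2 R H ∧ Projective P ∧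
        Nonempty (M ⊞ L ≅ H ⊞ P) :=
  ⟨IsOmega1.exists_biprod_iso, fun ⟨_, _, P, _, hH, _, ⟨e⟩⟩ =>
    ((hH.isOmega1_finitePresentation.biprod_projective P).of_iso e.symm).of_biprod_projective⟩

end Omega

section ExtColimits

universe w v u

variable {R : Type w} [Ring R] {C : Type u} [Category.{v} C] [Abelian C] [Linear R C]
  [EnoughProjectives C] {S : ShortComplex C} (hS : S.ShortExact) [Projective S.X₂]

include hS in
lemma preservesColimitsOfShape_ext_one_of_comp_comp_eq {J : Type*} [Category* J] {F : C}
    {t : S.X₂ ⟶ F} {b : F ⟶ S.X₂} (h : S.f ≫ t ≫ b = S.f)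
    [PreservesColimitsOfShape J ((linearCoyoneda R C).obj (op S.X₁))]
    [PreservesColimitsOfShape J ((linearCoyoneda R C).obj (op F))] :
    PreservesColimitsOfShape J ((Ext R C 1).obj (op S.X₃)) := by
  let α := (linearCoyoneda R C).map (S.f ≫ t).op
  have factors_iff {N : C} (f : S.X₁ ⟶ N) :
      (extConnecting R hS).app N f = 0 ↔ ∃ k : F ⟶ N, (S.f ≫ t) ≫ k = f := by
    rw [extConnecting_app_eq_zero_iff]
    constructor
    · rintro ⟨k, rfl⟩
      exact ⟨b ≫ k, by simp [reassoc_of% h]⟩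
    · rintro ⟨k, rfl⟩
      exact ⟨t ≫ k, by simp⟩
  have w (N : C) : α.app N ≫ (extConnecting R hS).app N = 0 :=
    ModuleCat.hom_ext (LinearMap.ext fun k => (factors_iff _).2 ⟨k, rfl⟩)
  have exact (N : C) : (ShortComplex.mk _ _ (w N)).Exact :=
    (ShortComplex.ShortExact.moduleCat_exact_iff_function_exact _).2 fun f => factors_iff f
  have epi (N : C) : Epi ((extConnecting R hS).app N) := (exact_and_epi_extConnecting_app hS N).2
  exact preservesColimitsOfShape_of_isColimit_cokernelCofork (w := w) fun N =>
    (exact N).gIsCokernel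

include hS in
lemma additive_ext_one : ((Ext R C 1).obj (op S.X₃)).Additive :=
  have (N : C) : Epi ((extConnecting R hS).app N) := (exact_and_epi_extConnecting_app hS N).2
  functor_additive_of_forall_epi_app (extConnecting R hS)

end ExtColimits

section FiniteSupport

universe w v u

-- Mathlib's `biproduct.lift_desc` is restricted to index types in `Type`.
lemma biproduct_lift_comp_desc {C : Type u} [Category.{v} C] [Preadditive C] {ι : Type*} [Fintype ι]
    {X : ι → C} [HasBiproduct X] {K L : C} (f : ∀ i, K ⟶ X i) (g : ∀ i, X i ⟶ L) :
    biproduct.lift f ≫ biproduct.desc g = ∑ i, f i ≫ g i := by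
  have total : ∑ i, biproduct.π X i ≫ biproduct.ι X i = 𝟙 (⨁ X) :=
    IsBilimit.total (biproduct.isBilimit X)
  calc biproduct.lift f ≫ biproduct.desc g
      = biproduct.lift f ≫ (∑ i, biproduct.π X i ≫ biproduct.ι X i) ≫ biproduct.desc g := by
        rw [total, Category.id_comp]
    _ = ∑ i, f i ≫ g i := by simp [Preadditive.sum_comp, Preadditive.comp_sum]

lemma exists_eq_sum_sigma_ι {R : Type u} [Ring R] {ι : Type v} (X : ι → ModuleCat.{v} R)
    (z : (∐ X : ModuleCat.{v} R)) :
    ∃ (T : Finset ι) (x : ∀ i, X i), z = ∑ i ∈ T, Sigma.ι X i (x i) := by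
  classical
  let y : DirectSum ι fun i => X i := (ModuleCat.coprodIsoDirectSum X).hom z
  refine ⟨y.support, y, ?_⟩
  calc z = (ModuleCat.coprodIsoDirectSum X).inv y := (Iso.hom_inv_id_apply _ z).symm
    _ = (ModuleCat.coprodIsoDirectSum X).inv
          (∑ i ∈ y.support, DirectSum.of (fun i => X i) i (y i)) := by
        rw [DirectSum.sum_support_of]
    _ = ∑ i ∈ y.support, Sigma.ι X i (y i) := by
        rw [map_sum]
        exact Finset.sum_congr rfl fun i _ =>
          ConcreteCategory.congr_hom (ModuleCat.lof_coprodIsoDirectSum_inv X i) (y i)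

variable {R : Type w} [Ring R] {C : Type u} [Category.{v} C] [Abelian C] [Linear R C]
  [EnoughProjectives C] {S : ShortComplex C} (hS : S.ShortExact) [Projective S.X₂] {ι : Type v}
  {X : ι → C} [HasCoproduct X] [Epi (sigmaComparison ((Ext R C 1).obj (op S.X₃)) X)]

include R hS in
lemma exists_eq_sum_comp_sigma_ι_add (s : S.X₁ ⟶ ∐ X) :
    ∃ (T : Finset ι) (f : ∀ i, S.X₁ ⟶ X i) (h : S.X₂ ⟶ ∐ X),
      s = ∑ i ∈ T, f i ≫ Sigma.ι X i + S.f ≫ h := by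
  let E := (Ext R C 1).obj (op S.X₃)
  let δ := extConnecting R hS
  obtain ⟨z, hz⟩ := (ModuleCat.epi_iff_surjective (sigmaComparison E X)).1 inferInstance
    (δ.app (∐ X) s)
  obtain ⟨T, x, hx⟩ := exists_eq_sum_sigma_ι (fun i => E.obj (X i)) z
  choose f hf using fun i => extConnecting_app_surjective (R := R) hS (X i) (x i)
  have comparison_ι (i : ι) : sigmaComparison E X (Sigma.ι (fun i => E.obj (X i)) i (x i)) =
      δ.app (∐ X) (f i ≫ Sigma.ι X i) := by
    rw [← hf]
    exact (ConcreteCategory.congr_hom (ι_comp_sigmaComparison E X i) _).trans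
      (ConcreteCategory.congr_hom (δ.naturality (Sigma.ι X i)) (f i)).symm
  have δ_sum : δ.app (∐ X) (∑ i ∈ T, f i ≫ Sigma.ι X i) = δ.app (∐ X) s := by
    rw [← hz, hx, map_sum, Finset.sum_congr rfl fun i _ => comparison_ι i]
    exact map_sum (δ.app (∐ X)).hom (fun i => f i ≫ Sigma.ι X i) T
  have δ_sub : δ.app (∐ X) (s - ∑ i ∈ T, f i ≫ Sigma.ι X i) = 0 :=
    (map_sub (δ.app (∐ X)).hom s _).trans (sub_eq_zero.2 δ_sum.symm)
  obtain ⟨h, hh⟩ := (extConnecting_app_eq_zero_iff hS _).1 δ_sub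
  exact ⟨T, f, h, by rw [hh, add_sub_cancel]⟩

attribute [local instance] Abelian.hasFiniteBiproducts in
include R hS in
lemma exists_comp_add_comp_eq_id [Projective S.X₁] (r : ∐ X ⟶ S.X₁) [Epi r] :
    ∃ (T : Finset ι) (a : S.X₁ ⟶ ⨁ fun i : T => X i) (b : (⨁ fun i : T => X i) ⟶ S.X₁)
      (g : S.X₂ ⟶ S.X₁), a ≫ b + S.f ≫ g = 𝟙 S.X₁ := by
  let s : S.X₁ ⟶ ∐ X := Projective.factorThru (𝟙 _) r
  obtain ⟨T, f, h, hs⟩ := exists_eq_sum_comp_sigma_ι_add (R := R) hS s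
  refine ⟨T, biproduct.lift fun i => f i, biproduct.desc fun i => Sigma.ι X i ≫ r, h ≫ r, ?_⟩
  calc _ = (∑ i ∈ T, f i ≫ Sigma.ι X i + S.f ≫ h) ≫ r := by
        rw [biproduct_lift_comp_desc, Finset.sum_coe_sort T fun i => f i ≫ Sigma.ι X i ≫ r]
        simp [Preadditive.sum_comp]
    _ = 𝟙 S.X₁ := by rw [← hs, Projective.factorThru_comp]

end FiniteSupport

section RightModules

variable {R : Type} [Ring R] {M : RMod R}

/-- The regular right `R`-module, identified with the left module `Rᵐᵒᵖ` over `Rᵐᵒᵖ`. -/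
def regIso (R : Type) [Ring R] : regR R ≅ ModuleCat.of Rᵐᵒᵖ Rᵐᵒᵖ :=
  LinearEquiv.toModuleIso
    { MulOpposite.opAddEquiv (α := R) with
      map_smul' := fun _ _ => MulOpposite.unop_injective rfl }

instance projective_regR : Projective (regR R) :=
  have := ModuleCat.projective_of_categoryTheory_projective (ModuleCat.of Rᵐᵒᵖ Rᵐᵒᵖ)
  Projective.of_iso (regIso R).symm this

lemma epi_sigmaDesc_regR (K : RMod R) :
    Epi (Sigma.desc fun f : regR R ⟶ K => f) := by
  refine (ModuleCat.epi_iff_surjective _).2 fun x => ?_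
  let f : regR R ⟶ K :=
    (regIso R).hom ≫ ModuleCat.ofHom (LinearMap.toSpanSingleton Rᵐᵒᵖ K x)
  refine ⟨Sigma.ι (fun _ : regR R ⟶ K => regR R) f (1 : R), ?_⟩
  exact (ConcreteCategory.congr_hom (Sigma.ι_desc (fun f : regR R ⟶ K => f) f) (1 : R)).trans
    (one_smul Rᵐᵒᵖ x)

lemma finitePresentation_biproduct_regR (T : Type) [Finite T] :
    Module.FinitePresentation Rᵐᵒᵖ (⨁ fun _ : T => regR R : RMod R) := by
  have : Module.Finite Rᵐᵒᵖ (regR R) := .equiv (regIso R).symm.toLinearEquiv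
  have : Module.Finite Rᵐᵒᵖ (⨁ fun _ : T => regR R : RMod R) :=
    .equiv (ModuleCat.biproductIsoPi fun _ : T => regR R).symm.toLinearEquiv
  have projective : Projective (⨁ fun _ : T => regR R : RMod R) := inferInstance
  have := (IsProjective.iff_projective _).2 projective
  exact Module.finitePresentation_of_projective _ _

lemma IsOmega1.commutesWithDirectLimits
    (hM : IsOmega1 R (fun K => Module.FinitePresentation Rᵐᵒᵖ K) M) :
    CommutesWithDirectLimits R M := by
  obtain ⟨K, P, i, p, w, mono, epi, exact, hP, hK⟩ := hM
  intro J _ _ _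
  have hS : (ShortComplex.mk i p w).ShortExact := .mk' exact mono epi
  obtain ⟨F, t, b, finite_F, hF, comp_eq⟩ := exists_comp_comp_eq_self_of_finite i
  have := (IsProjective.iff_projective _).2 hF
  have := Module.finitePresentation_of_projective Rᵐᵒᵖ F
  have preserves (N : RMod R) [Module.FinitePresentation Rᵐᵒᵖ N] :
      PreservesColimitsOfShape J ((linearCoyoneda ℤ (RMod R)).obj (op N)) :=
    have := isFinitelyPresentable_of_finitePresentation N
    (preservesFilteredColimits_linearCoyoneda ℤ N).preserves_filtered_colimits J
  have := preserves K
  have := preserves F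
  exact preservesColimitsOfShape_ext_one_of_comp_comp_eq hS comp_eq

lemma CommutesWithDirectLimits.commutesWithSumsOfR (hM : CommutesWithDirectLimits R M) :
    CommutesWithSumsOfR R 1 M := by
  classical
  intro ι
  let S : ShortComplex (RMod R) := .mk _ (Projective.π M) (kernel.condition _)
  have hS : S.ShortExact := .mk' (ShortComplex.exact_kernel _) inferInstance inferInstance
  have : (extFun R 1 M).Additive := additive_ext_one hS
  have := hM (Finset (Discrete ι))
  have := preservesCoproduct_of_preservesColimitsOfShape_finset (extFun R 1 M) fun _ : ι => regR R
  exact inferInstanceAs (IsIso (sigmaComparison (extFun R 1 M) fun _ : ι => regR R))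

lemma HasProjDimLE1.isOmega1_of_commutesWithSumsOfR (hM : HasProjDimLE1 R M)
    (h : CommutesWithSumsOfR R 1 M) :
    IsOmega1 R (fun K => Module.FinitePresentation Rᵐᵒᵖ K) M := by
  obtain ⟨K, P, i, p, w, hK, hP, mono, epi, exact⟩ := hM
  have hS : (ShortComplex.mk i p w).ShortExact := .mk' exact mono epi
  have : IsIso (sigmaComparison (extFun R 1 M) fun _ : regR R ⟶ K => regR R) := h _
  have := epi_sigmaDesc_regR K
  obtain ⟨T, a, b, g, id_eq⟩ :=
    exists_comp_add_comp_eq_id (R := ℤ) hS (Sigma.desc fun f : regR R ⟶ K => f)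
  exact isOmega1_iff_exists_shortExact.2 ⟨_, Iso.refl _, shortExact_pushout hS a,
    projective_pushout id_eq, finitePresentation_biproduct_regR T⟩

end RightModules

theorem projdim1_tfae (R : Type) [Ring R] (M : RMod R) (hpd : HasProjDimLE1 R M) :
    (IsOmega1 R (fun K => Module.FinitePresentation Rᵐᵒᵖ K) M ↔
      ∃ (L H P : RMod R), Projective L ∧ IsFP2 R H ∧ Projective P ∧
        Nonempty ((M ⊞ L) ≅ (H ⊞ P))) ∧
    (IsOmega1 R (fun K => Module.FinitePresentation Rᵐᵒᵖ K) M ↔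
      CommutesWithDirectLimits R M) ∧
    (IsOmega1 R (fun K => Module.FinitePresentation Rᵐᵒᵖ K) M ↔
      CommutesWithSumsOfR R 1 M) := by
  exact ⟨isOmega1_finitePresentation_iff_exists_biprod_iso,
    ⟨IsOmega1.commutesWithDirectLimits,
      fun h => hpd.isOmega1_of_commutesWithSumsOfR h.commutesWithSumsOfR⟩,
    ⟨fun h => h.commutesWithDirectLimits.commutesWithSumsOfR, hpd.isOmega1_of_commutesWithSumsOfR⟩⟩
end
end

section
/- Let M be a right R-module of projective dimension at most 1 such that Ext¹_R(M, −) commutes with direct sums of copies of R. Suppose 0 → Rⁿ → C → M → 0 is exact with Ext¹_R(C, R) = 0. Then Ext¹_R(C, R^{(κ)}) = 0 for every cardinal κ, and consequently C is projective. -/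
open CategoryTheory CategoryTheory.Limits Opposite

noncomputable section

/-!
Since `Ext¹(Rⁿ, -) = 0`, the long exact sequence of `0 → Rⁿ → C → M → 0` makes
`Ext¹(M, R^{(κ)}) → Ext¹(C, R^{(κ)})` surjective. Precomposed with the surjection
`Ext¹(M, R)^{(κ)} → Ext¹(M, R^{(κ)})`, it factors by naturality through `Ext¹(C, R)^{(κ)} = 0`, so
its target vanishes. As `C` has projective dimension at most one, `Ext¹(C, -)` is right exact, hence
vanishes on every quotient of a free module, that is, on every module.

The functor `Ext k A n` is a derived functor, while the long exact sequences and the projective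
dimension are about `Abelian.Ext`; both are computed by cocycles on a projective resolution, and
that is how surjectivity and vanishing pass from one to the other.
-/

lemma isZero_obj_sigma_of_epi {C D ι : Type*} [Category* C] [Category* D] [HasZeroMorphisms D]
    {F F' : C ⥤ D} (α : F ⟶ F') (G : ι → C) [HasCoproduct G] [HasCoproduct fun i => F.obj (G i)]
    [Epi (α.app (∐ G))] (hF : Epi (Sigma.desc fun i => F.map (Sigma.ι G i)))
    (hF' : ∀ i, IsZero (F'.obj (G i))) : IsZero (F'.obj (∐ G)) := by
  refine IsZero.of_epi_eq_zero (Sigma.desc (fun i => F.map (Sigma.ι G i)) ≫ α.app (∐ G))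
    (Sigma.hom_ext _ _ fun i => ?_)
  rw [Sigma.ι_desc_assoc, NatTrans.naturality, comp_zero,
    (hF' i).eq_zero_of_tgt (α.app (G i)), zero_comp]

section HomologyMap

variable {k : Type*} [Ring k]

lemma epi_shortComplexHomologyMap_of_exists_eq_add {S₁ S₂ : ShortComplex (ModuleCat k)}
    (φ : S₁ ⟶ S₂) (hφ : ∀ y : S₂.X₂, S₂.g y = 0 →
      ∃ x : S₁.X₂, S₁.g x = 0 ∧ ∃ z : S₂.X₁, y = φ.τ₂ x + S₂.f z) :
    Epi (ShortComplex.homologyMap φ) := by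
  rw [ModuleCat.epi_iff_surjective]
  intro c
  obtain ⟨c, rfl⟩ := (ModuleCat.epi_iff_surjective S₂.homologyπ).1 inferInstance c
  obtain ⟨x, hx, z, hz⟩ := hφ (S₂.iCycles c) congr($(S₂.iCycles_g) c)
  let x' : S₁.cycles := S₁.moduleCatCyclesIso.inv ⟨x, hx⟩
  have hx' : S₁.iCycles x' = x := congr($(S₁.moduleCatCyclesIso_inv_iCycles) ⟨x, hx⟩)
  have hc : c = ShortComplex.cyclesMap φ x' + S₂.toCycles z := by
    apply (ModuleCat.mono_iff_injective S₂.iCycles).1 inferInstance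
    rw [hz, map_add, ← hx']
    exact congr($((ShortComplex.cyclesMap_i φ).symm) x' + $(S₂.toCycles_i.symm) z)
  have hπ : ShortComplex.homologyMap φ (S₁.homologyπ x') =
      S₂.homologyπ (ShortComplex.cyclesMap φ x') :=
    congr($(ShortComplex.homologyπ_naturality φ) x')
  have hz' : S₂.homologyπ (S₂.toCycles z) = 0 := congr($(S₂.toCycles_comp_homologyπ) z)
  exact ⟨S₁.homologyπ x', by rw [hπ, hc, map_add, hz', add_zero]⟩

lemma epi_homologyMap_of_exists_eq_add {ι : Type*} {c : ComplexShape ι}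
    {K L : HomologicalComplex (ModuleCat k) c} (φ : K ⟶ L) (i j l : ι)
    (hi : c.prev j = i) (hl : c.next j = l)
    (hφ : ∀ y : L.X j, L.d j l y = 0 →
      ∃ x : K.X j, K.d j l x = 0 ∧ ∃ z : L.X i, y = φ.f j x + L.d i j z) :
    Epi (HomologicalComplex.homologyMap φ j) := by
  subst hi hl
  exact epi_shortComplexHomologyMap_of_exists_eq_add
    ((HomologicalComplex.shortComplexFunctor _ c j).map φ) hφ

end HomologyMap

universe w v u

variable {A : Type u} [Category.{v} A] [Abelian A]

section LinearYoneda

variable {k : Type*} [Ring k] [Linear k A]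

/-- The contravariant functoriality of `K ↦ K.linearYonedaObj k Y`: precomposition with a chain
map `K ⟶ L`, as a cochain map `Hom(L, Y) ⟶ Hom(K, Y)`. -/
def linearYonedaPrecomp {K L : ChainComplex A ℕ} (φ : K ⟶ L) (Y : A) :
    L.linearYonedaObj k Y ⟶ K.linearYonedaObj k Y :=
  (HomologicalComplex.unopFunctor _ _).map
    (((((linearYoneda k A).obj Y).rightOp.mapHomologicalComplex _).map φ).op)

variable [EnoughProjectives A]

lemma isoExt_hom_naturality {X X' : A} (f : X ⟶ X') (P : ProjectiveResolution X)
    (Q : ProjectiveResolution X') (φ : P.complex ⟶ Q.complex)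
    (hφ : φ.f 0 ≫ Q.π.f 0 = P.π.f 0 ≫ f) (n : ℕ) (Y : A) :
    ((Ext k A n).map f.op).app Y ≫ (P.isoExt n Y).hom =
      (Q.isoExt n Y).hom ≫ HomologicalComplex.homologyMap (linearYonedaPrecomp φ Y) n := by
  let F := ((linearYoneda k A).obj Y).rightOp
  have derived : CommSq _ _ _ _ :=
    ⟨ProjectiveResolution.isoLeftDerivedObj_hom_naturality f P Q φ hφ F n⟩
  have homology : CommSq _ _ _ _ :=
    ⟨HomologicalComplex.homologyOp_hom_naturality (linearYonedaPrecomp (k := k) φ Y) n⟩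
  exact (homology.vert_inv.vert_comp derived.vert_inv).unop.w

end LinearYoneda

section DerivedCategory

variable [HasExt.{w} A]

lemma surjective_precomp_mk₀_of_subsingleton {S : ShortComplex A} (hS : S.ShortExact) (n : ℕ)
    (Y : A) [Subsingleton (Abelian.Ext S.X₁ Y n)] :
    Function.Surjective ((Abelian.Ext.mk₀ S.g).precomp Y (zero_add n)) := fun x =>
  Abelian.Ext.contravariant_sequence_exact₂ hS Y x (Subsingleton.elim _ _)

lemma hasProjectiveDimensionLT_of_subsingleton_ext_sigma [HasCoproducts.{v} A] {G : A}
    (hG : IsSeparator G) {C : A} (n : ℕ) [HasProjectiveDimensionLT C (n + 1)]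
    (hC : ∀ ι : Type v, Subsingleton (Abelian.Ext C (∐ fun _ : ι => G) n)) :
    HasProjectiveDimensionLT C n := by
  refine (hasProjectiveDimensionLT_iff C n).2 fun i hi Y e => ?_
  obtain rfl | hlt := hi.eq_or_lt
  · let p : (∐ fun _ : G ⟶ Y => G) ⟶ Y := Sigma.desc fun f => f
    have : Epi p := (isSeparator_iff_epi G).1 hG Y
    have hS : (ShortComplex.mk (kernel.ι p) p (kernel.condition p)).ShortExact :=
      .mk' (ShortComplex.exact_of_f_is_kernel _ (kernelIsKernel p)) inferInstance this
    obtain ⟨e', rfl⟩ := Abelian.Ext.covariant_sequence_exact₃ C hS e rfl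
      (Abelian.Ext.eq_zero_of_hasProjectiveDimensionLT _ (n + 1) le_rfl)
    rw [(hC _).elim e' 0, Abelian.Ext.zero_comp]
  · exact e.eq_zero_of_hasProjectiveDimensionLT (n + 1) hlt

variable {k : Type*} [Ring k] [Linear k A] [EnoughProjectives A]

lemma isZero_ext_succ_iff_subsingleton {X Y : A} {n : ℕ} :
    IsZero (((Ext k A (n + 1)).obj (op X)).obj Y) ↔ Subsingleton (Abelian.Ext X Y (n + 1)) := by
  let P := projectiveResolution X
  rw [(P.isoExt (n + 1) Y).isZero_iff, ← HomologicalComplex.exactAt_iff_isZero_homology,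
    HomologicalComplex.exactAt_iff' _ n (n + 1) (n + 2) (by simp) (by simp),
    ShortComplex.moduleCat_exact_iff]
  constructor
  · refine fun h => subsingleton_of_forall_eq 0 fun e => ?_
    obtain ⟨x, hx, rfl⟩ := P.extMk_surjective e (n + 2) rfl
    exact (P.extMk_eq_zero_iff x _ rfl hx n rfl).2 (h x hx)
  · exact fun _ x hx => (P.extMk_eq_zero_iff x (n + 2) rfl hx n rfl).1 (Subsingleton.elim _ _)

lemma epi_ext_map_app_of_surjective_precomp {X X' : A} (f : X ⟶ X') {n : ℕ} {Y : A}
    (hf : Function.Surjective ((Abelian.Ext.mk₀ f).precomp Y (zero_add (n + 1)))) :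
    Epi (((Ext k A (n + 1)).map f.op).app Y) := by
  let P := projectiveResolution X
  let Q := projectiveResolution X'
  have hlift := ProjectiveResolution.lift_commutes_zero f P Q
  let φ : P.Hom Q f := ⟨ProjectiveResolution.lift f P Q, by simpa using hlift⟩
  have : Epi (HomologicalComplex.homologyMap (linearYonedaPrecomp (k := k) φ.hom Y) (n + 1)) := by
    refine epi_homologyMap_of_exists_eq_add _ n (n + 1) (n + 2) (by simp) (by simp)
      fun (y : P.complex.X (n + 1) ⟶ Y) (hy : P.complex.d (n + 2) (n + 1) ≫ y = 0) => ?_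
    obtain ⟨e, he⟩ := hf (P.extMk y (n + 2) rfl hy)
    obtain ⟨x, hx, rfl⟩ := Q.extMk_surjective e (n + 2) rfl
    have hyx := sub_eq_zero.2
      (he.symm.trans (ProjectiveResolution.mk₀_comp_extMk x (n + 2) rfl hx φ))
    rw [P.sub_extMk, P.extMk_eq_zero_iff _ _ _ _ n rfl] at hyx
    obtain ⟨z, hz⟩ := hyx
    exact ⟨x, hx, z, sub_eq_iff_eq_add'.1 hz.symm⟩
  have hnat := isoExt_hom_naturality (k := k) f P Q φ.hom hlift (n + 1) Y
  rw [(Iso.eq_comp_inv _).2 hnat]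
  infer_instance

end DerivedCategory

section Ext

variable {k : Type*} [Ring k] [Linear k A] [EnoughProjectives A]

lemma epi_ext_map_g_app_of_hasProjectiveDimensionLT {S : ShortComplex A} (hS : S.ShortExact)
    (n : ℕ) [HasProjectiveDimensionLT S.X₁ (n + 1)] (Y : A) :
    Epi (((Ext k A (n + 1)).map S.g.op).app Y) :=
  let := HasExt.standard A
  have := HasProjectiveDimensionLT.subsingleton S.X₁ (n + 1) (n + 1) le_rfl Y
  epi_ext_map_app_of_surjective_precomp S.g (surjective_precomp_mk₀_of_subsingleton hS (n + 1) Y)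

theorem ext1_vanishing_on_free_modules_general [HasCoproducts.{v} A] {G : A} (hG : IsSeparator G)
    {S : ShortComplex A} (hS : S.ShortExact) (n : ℕ) (hK : HasProjectiveDimensionLT S.X₁ (n + 1))
    (hM : HasProjectiveDimensionLT S.X₃ (n + 2))
    (hc : ∀ ι : Type v, Epi (Sigma.desc fun i : ι =>
      ((Ext k A (n + 1)).obj (op S.X₃)).map (Sigma.ι (fun _ : ι => G) i)))
    (h0 : IsZero (((Ext k A (n + 1)).obj (op S.X₂)).obj G)) :
    (∀ ι : Type v, IsZero (((Ext k A (n + 1)).obj (op S.X₂)).obj (∐ fun _ : ι => G))) ∧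
      HasProjectiveDimensionLT S.X₂ (n + 1) := by
  have hvanish (ι : Type v) : IsZero (((Ext k A (n + 1)).obj (op S.X₂)).obj (∐ fun _ : ι => G)) :=
    have := epi_ext_map_g_app_of_hasProjectiveDimensionLT (k := k) hS n (∐ fun _ : ι => G)
    isZero_obj_sigma_of_epi ((Ext k A (n + 1)).map S.g.op) _ (hc ι) fun _ => h0
  have hC : HasProjectiveDimensionLT S.X₂ (n + 2) :=
    hS.hasProjectiveDimensionLT_X₂ (n + 2) inferInstance hM
  let := HasExt.standard A
  exact ⟨hvanish, hasProjectiveDimensionLT_of_subsingleton_ext_sigma hG (n + 1) fun ι =>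
    isZero_ext_succ_iff_subsingleton.1 (hvanish ι)⟩

end Ext

/-- The identification of right `R`-modules between `Rᵐᵒᵖ`, acting on itself on the left, and `R`,
on which `op r` acts by `x ↦ x * r`. It exhibits `R` as a free right module of rank one. -/
def mulOppositeLinearEquivSelf (R : Type*) [Semiring R] : Rᵐᵒᵖ ≃ₗ[Rᵐᵒᵖ] R :=
  { MulOpposite.opAddEquiv.symm with map_smul' := fun _ _ => rfl }

instance projective_rightModule_pi (R : Type u) [Ring R] (ι : Type*) [Finite ι] :
    Projective (ModuleCat.of Rᵐᵒᵖ (ι → R)) :=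
  have : Module.Free Rᵐᵒᵖ R := .of_equiv (mulOppositeLinearEquivSelf R)
  have : Module.Projective Rᵐᵒᵖ (ι → R) := inferInstance
  ModuleCat.projective_of_categoryTheory_projective _

lemma isSeparator_rightModule_self (R : Type u) [Ring R] : IsSeparator (ModuleCat.of Rᵐᵒᵖ R) :=
  (isSeparator_def _).2 fun X Y f g h => by
    ext x
    simpa using congr($(h (ModuleCat.ofHom ((LinearMap.toSpanSingleton Rᵐᵒᵖ X x).comp
      (mulOppositeLinearEquivSelf R).symm.toLinearMap))) (mulOppositeLinearEquivSelf R 1))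

lemma HasProjDimLE1.hasProjectiveDimensionLT {R : Type} [Ring R] {M : RMod R}
    (hM : HasProjDimLE1 R M) : HasProjectiveDimensionLT M 2 := by
  obtain ⟨P₁, P₀, f, p, w, _, _, hf, hp, hex⟩ := hM
  have hS : (ShortComplex.mk f p w).ShortExact := .mk' hex hf hp
  exact hS.hasProjectiveDimensionLT_X₃ 1 (inferInstanceAs (HasProjectiveDimensionLT P₁ 1))
    (inferInstanceAs (HasProjectiveDimensionLT P₀ (1 + 1)))

theorem ext1_vanishing_on_free_modules (R : Type) [Ring R] (M : RMod R)
    (hpd : HasProjDimLE1 R M) (hc : CommutesWithSumsOfR R 1 M)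
    (n : ℕ) (C : RMod R) (f : ModuleCat.of Rᵐᵒᵖ (Fin n → R) ⟶ C) (g : C ⟶ M)
    (w : f ≫ g = 0) (hf : Mono f) (hg : Epi g) (hex : (ShortComplex.mk f g w).Exact)
    (h0 : IsZero ((extFun R 1 C).obj (regR R))) :
    (∀ (ι : Type), IsZero ((extFun R 1 C).obj (∐ (fun _ : ι => regR R)))) ∧
      Projective C := by
  have hS : (ShortComplex.mk f g w).ShortExact := .mk' hex hf hg
  obtain ⟨hvanish, hC⟩ := ext1_vanishing_on_free_modules_general
    (isSeparator_rightModule_self R) hS 0 (inferInstanceAs (HasProjectiveDimensionLT _ 1))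
    hpd.hasProjectiveDimensionLT (fun ι => have := hc ι; inferInstance) h0
  exact ⟨hvanish, projective_iff_hasProjectiveDimensionLT_one.2 hC⟩
end
end

section
/- Let R be a right hereditary ring and M a right R-module. The following are equivalent: (1) Ext¹_R(M, −) commutes with direct limits; (2) Ext¹_R(M, −) commutes with direct sums; (3) Ext¹_R(M, −) commutes with direct sums of copies of R; (4) M = N ⊕ P where N is finitely presented and P is projective. -/
open CategoryTheory CategoryTheory.Limits Opposite

noncomputable section

/-!
A short exact sequence `0 ⟶ K ⟶ F ⟶ M ⟶ 0` with `F` free has `K` projective, so `Ext¹(M, -)` is the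
cokernel of `Hom(F, -) ⟶ Hom(K, -)`. If `M = N ⊕ P`, the same cokernel is obtained from a
presentation of `N` by finitely generated projective modules, hence it commutes with filtered
colimits; direct sums are filtered colimits of finite direct sums.

Conversely, `K` is a direct summand of a direct sum of copies of `R`. If `Ext¹(M, -)` commutes with
that sum, the class of `𝟙 K` in `Ext¹(M, K)` is also represented by an endomorphism of `K` with
range in a finitely generated submodule `L`, which makes `M` a direct summand of `F / L`. All but
finitely many basis vectors of `F` miss `L`, so `F / L` maps to a free module with finitely
presented kernel, and restricting this map to `M` splits `M` as required.
-/

section ModuleTheory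

universe u

variable {S : Type u} [Ring S]

/-- A ring is left hereditary if its left ideals are projective; the right hereditary rings of the
theorem are the rings `R` such that `Rᵐᵒᵖ` is left hereditary. -/
class IsLeftHereditary (S : Type u) [Ring S] : Prop where
  projective_ideal (I : Ideal S) : Module.Projective S I

lemma IsLeftHereditary.injective_quotient [IsLeftHereditary S] {E : Type u} [AddCommGroup E]
    [Module S E] (hE : Module.Injective S E) (X : Submodule S E) : Module.Injective S (E ⧸ X) := by
  refine Module.Baer.injective fun I g => ?_
  have := IsLeftHereditary.projective_ideal I
  obtain ⟨f, rfl⟩ := Module.projective_lifting_property X.mkQ g X.mkQ_surjective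
  obtain ⟨f', hf'⟩ := Module.Baer.of_injective hE I f
  exact ⟨X.mkQ ∘ₗ f', fun x hx => congrArg X.mkQ (hf' x hx)⟩

lemma exists_injective_linearMap_to_injective (F : Type u) [AddCommGroup F] [Module S F] :
    ∃ (E : ModuleCat.{u} S) (e : F →ₗ[S] E), Module.Injective S E ∧ Function.Injective e :=
  ⟨Injective.under (ModuleCat.of S F), (Injective.ι (ModuleCat.of S F)).hom,
    Module.injective_module_of_injective_object S _
      (inj := (inferInstance : CategoryTheory.Injective (Injective.under (ModuleCat.of S F)))),
    (ModuleCat.mono_iff_injective _).1 inferInstance⟩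

/-- Embed a free cover `F` of `N` into an injective module `E`; a lift of the induced map
`N → E ⧸ ker (F → N)` takes its values in `F`. -/
lemma projective_of_lifting_injective_quotient {N : Type u} [AddCommGroup N] [Module S N]
    (h : ∀ (E : Type u) [AddCommGroup E] [Module S E], Module.Injective S E →
      ∀ (X : Submodule S E) (g : N →ₗ[S] E ⧸ X), ∃ g' : N →ₗ[S] E, X.mkQ ∘ₗ g' = g) :
    Module.Projective S N := by
  refine Module.Projective.of_lifting_property'' fun f hf => ?_
  obtain ⟨E, e, hE, he⟩ := exists_injective_linearMap_to_injective (S := S) (N →₀ S)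
  let X := (LinearMap.ker f).map e
  obtain ⟨k, hk⟩ := h E hE X ((LinearMap.ker f).mapQ X e (Submodule.le_comap_map _ _) ∘ₗ
    (f.quotKerEquivOfSurjective hf).symm)
  have hkf (b : N →₀ S) : ∃ c ∈ LinearMap.ker f, e c = k (f b) - e b := by
    have hfb : (f.quotKerEquivOfSurjective hf).symm (f b) = Submodule.Quotient.mk b :=
      (LinearEquiv.symm_apply_eq _).2 rfl
    have : X.mkQ (k (f b)) = X.mkQ (e b) := by
      simpa [hfb] using congr($hk (f b))
    exact (Submodule.Quotient.eq X).1 this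
  have hrange (n : N) : k n ∈ LinearMap.range e := by
    obtain ⟨b, rfl⟩ := hf n
    obtain ⟨c, -, hc⟩ := hkf b
    exact ⟨c + b, by rw [map_add, hc, sub_add_cancel]⟩
  let l : N →ₗ[S] (N →₀ S) := (LinearEquiv.ofInjective e he).symm ∘ₗ k.codRestrict _ hrange
  have hl (n : N) : e (l n) = k n :=
    congrArg Subtype.val ((LinearEquiv.ofInjective e he).apply_symm_apply ⟨k n, hrange n⟩)
  refine ⟨l, LinearMap.ext fun n => ?_⟩
  obtain ⟨b, rfl⟩ := hf n
  obtain ⟨c, hc, hcb⟩ := hkf b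
  have : l (f b) = c + b := he (by rw [hl, map_add, hcb, sub_add_cancel])
  simpa [this] using hc

instance IsLeftHereditary.projective_submodule [IsLeftHereditary S] {P : Type u} [AddCommGroup P]
    [Module S P] [Module.Projective S P] (N : Submodule S P) : Module.Projective S N := by
  refine projective_of_lifting_injective_quotient fun E _ _ hE X g => ?_
  have := IsLeftHereditary.injective_quotient hE X
  obtain ⟨g', hg'⟩ := Module.Injective.extension_property S (E ⧸ X) N P N.subtype
    N.injective_subtype g
  obtain ⟨k, hk⟩ := Module.projective_lifting_property X.mkQ g' X.mkQ_surjective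
  exact ⟨k ∘ₗ N.subtype, by rw [← LinearMap.comp_assoc, hk, hg']⟩

lemma finitePresentation_of_retract {M N : Type*} [AddCommGroup M] [Module S M] [AddCommGroup N]
    [Module S N] [Module.FinitePresentation S M] (i : N →ₗ[S] M) (r : M →ₗ[S] N)
    (hri : r ∘ₗ i = LinearMap.id) : Module.FinitePresentation S N :=
  Module.finitePresentation_of_surjective r (fun n => ⟨i n, congr($hri n)⟩)
    (LinearMap.ker_eq_range_of_comp_eq_id hri ▸ .of_finite)

lemma exists_finset_le_supported_of_fg {X : Type*} {L : Submodule S (X →₀ S)} (hL : L.FG) :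
    ∃ A : Finset X, L ≤ Finsupp.supported S S (A : Set X) := by
  classical
  obtain ⟨t, rfl⟩ := hL
  refine ⟨t.biUnion Finsupp.support, Submodule.span_le.2 fun x hx => ?_⟩
  rw [SetLike.mem_coe, Finsupp.mem_supported]
  exact_mod_cast Finset.subset_biUnion_of_mem Finsupp.support hx

lemma ker_lsubtypeDomain_compl {X : Type*} (A : Set X) :
    LinearMap.ker (Finsupp.lsubtypeDomain (M := S) (R := S) Aᶜ) = Finsupp.supported S S A := by
  ext x
  rw [Finsupp.mem_supported', LinearMap.mem_ker, Finsupp.ext_iff]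
  exact Subtype.forall

lemma finitePresentation_ker_liftQ {F G : Type*} [AddCommGroup F] [Module S F] [AddCommGroup G]
    [Module S G] {L : Submodule S F} (hL : L.FG) (π : F →ₗ[S] G) (hLπ : L ≤ LinearMap.ker π)
    [Module.FinitePresentation S (LinearMap.ker π)] :
    Module.FinitePresentation S (LinearMap.ker (L.liftQ π hLπ)) := by
  let q : LinearMap.ker π →ₗ[S] LinearMap.ker (L.liftQ π hLπ) :=
    L.mkQ.restrict fun _ hx => hx
  refine Module.finitePresentation_of_surjective q ?_ ?_
  · rintro ⟨y, hy⟩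
    obtain ⟨x, rfl⟩ := L.mkQ_surjective y
    exact ⟨⟨x, hy⟩, rfl⟩
  · have hq : LinearMap.ker q = L.comap (LinearMap.ker π).subtype := by
      ext x
      exact Subtype.ext_iff.trans (Submodule.Quotient.mk_eq_zero L)
    rw [hq]
    refine Submodule.fg_of_fg_map_injective _ (LinearMap.ker π).injective_subtype ?_
    rwa [Submodule.map_comap_subtype, inf_eq_right.2 hLπ]

lemma exists_linearMap_finitePresentation_ker {X : Type*} {L : Submodule S (X →₀ S)}
    (hL : L.FG) : ∃ (B : Set X) (π : ((X →₀ S) ⧸ L) →ₗ[S] (B →₀ S)),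
      Module.FinitePresentation S (LinearMap.ker π) := by
  obtain ⟨A, hA⟩ := exists_finset_le_supported_of_fg hL
  have := Module.FinitePresentation.of_equiv (N := Finsupp.supported S S (A : Set X))
    (Finsupp.supportedEquivFinsupp (A : Set X)).symm
  rw [← ker_lsubtypeDomain_compl] at hA this
  exact ⟨_, L.liftQ _ hA, finitePresentation_ker_liftQ hL _ hA⟩

/-- The kernel of `π ∘ i` is a retract of `ker π`, and it splits off because the range of `π ∘ i` is
projective. -/
lemma exists_linearEquiv_prod_of_retract [IsLeftHereditary S] {M Q G : Type u} [AddCommGroup M]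
    [Module S M] [AddCommGroup Q] [Module S Q] [AddCommGroup G] [Module S G]
    [Module.Projective S G] (i : M →ₗ[S] Q) (r : Q →ₗ[S] M) (hri : r ∘ₗ i = LinearMap.id)
    (π : Q →ₗ[S] G) [Module.FinitePresentation S (LinearMap.ker π)] :
    ∃ (N : Submodule S M) (P : Submodule S G), Module.FinitePresentation S N ∧
      Module.Projective S P ∧ Nonempty (M ≃ₗ[S] N × P) := by
  let β := (π ∘ₗ i).rangeRestrict
  obtain ⟨σ, hσ⟩ := Module.projective_lifting_property β LinearMap.id
    (LinearMap.surjective_rangeRestrict _)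
  obtain ⟨e, he, -⟩ := (LinearMap.exact_subtype_ker_map β).splitSurjectiveEquiv
    (LinearMap.ker β).injective_subtype ⟨σ, hσ⟩
  refine ⟨LinearMap.ker β, LinearMap.range (π ∘ₗ i), ?_, inferInstance, ⟨e⟩⟩
  refine finitePresentation_of_retract (M := LinearMap.ker π)
    (i.restrict fun m hm => congrArg Subtype.val hm)
    (LinearMap.fst S _ _ ∘ₗ e.toLinearMap ∘ₗ r ∘ₗ (LinearMap.ker π).subtype)
    (LinearMap.ext fun n => ?_)
  have hrn : r (i n) = e.symm (n, 0) := congr($hri n).trans congr($he n)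
  change (e (r (i n))).1 = n
  rw [hrn, e.apply_symm_apply]

/-- The endomorphism `ψ` of `X →₀ S` makes `M` a retract of `(X →₀ S) ⧸ L`. -/
lemma exists_linearEquiv_prod_of_endomorphism [IsLeftHereditary S] {X M : Type u}
    [AddCommGroup M] [Module S M] {p : (X →₀ S) →ₗ[S] M} (hp : Function.Surjective p)
    {L : Submodule S (X →₀ S)} (hL : L.FG) (hLp : L ≤ LinearMap.ker p)
    (ψ : (X →₀ S) →ₗ[S] (X →₀ S)) (hpψ : p ∘ₗ ψ = p) (hψL : LinearMap.ker p ≤ L.comap ψ) :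
    ∃ (N : Submodule S M) (B : Set X) (P : Submodule S (B →₀ S)),
      Module.FinitePresentation S N ∧ Module.Projective S P ∧ Nonempty (M ≃ₗ[S] N × P) := by
  obtain ⟨B, π, _⟩ := exists_linearMap_finitePresentation_ker hL
  let e := p.quotKerEquivOfSurjective hp
  obtain ⟨N, P, hNP⟩ := exists_linearEquiv_prod_of_retract
    ((LinearMap.ker p).mapQ L ψ hψL ∘ₗ e.symm) (L.liftQ p hLp) (LinearMap.ext fun m => by
      obtain ⟨x, rfl⟩ := hp m
      have hx : e.symm (p x) = Submodule.Quotient.mk x := (LinearEquiv.symm_apply_eq _).2 rfl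
      simpa [hx] using congr($hpψ x)) π
  exact ⟨N, B, P, hNP⟩

end ModuleTheory

section TwoTermResolution

variable {C : Type*} [Category* C] [Abelian C] {K F M : C}

open scoped ZeroObject in
/-- The objects of the complex `twoTerm i`. -/
def twoTermX (K F : C) : ℕ → C
  | 0 => F
  | 1 => K
  | _ + 2 => 0

/-- The differentials of the complex `twoTerm i`. -/
def twoTermD (i : K ⟶ F) : ∀ n, twoTermX K F (n + 1) ⟶ twoTermX K F n
  | 0 => i
  | _ + 1 => 0

/-- The complex `0 ⟶ K ⟶ F`, with `F` in degree `0`. -/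
def twoTerm (i : K ⟶ F) : ChainComplex C ℕ :=
  ChainComplex.of (twoTermX K F) (twoTermD i) fun n => by cases n <;> exact zero_comp

lemma twoTerm_d (i : K ⟶ F) : (twoTerm i).d 1 0 = i :=
  ChainComplex.of_d (twoTermX K F) (twoTermD i) 0

lemma isZero_twoTerm_X (i : K ⟶ F) (n : ℕ) : IsZero ((twoTerm i).X (n + 2)) := isZero_zero C

lemma twoTerm_exactAt_succ (i : K ⟶ F) [Mono i] (n : ℕ) : (twoTerm i).ExactAt (n + 1) := by
  rw [HomologicalComplex.exactAt_iff' _ (n + 2) (n + 1) n (by simp) (by simp)]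
  cases n with
  | zero =>
    refine (ShortComplex.exact_iff_mono _ ((isZero_twoTerm_X i 0).eq_of_src _ _)).2 ?_
    change Mono ((twoTerm i).d 1 0)
    rwa [twoTerm_d]
  | succ n => exact ShortComplex.exact_of_isZero_X₂ _ (isZero_twoTerm_X i n)

/-- The augmentation of the complex `0 ⟶ K ⟶ F` given by a morphism `F ⟶ M` vanishing on `K`. -/
def twoTermπ {i : K ⟶ F} {p : F ⟶ M} (w : i ≫ p = 0) :
    twoTerm i ⟶ (ChainComplex.single₀ C).obj M :=
  (ChainComplex.toSingle₀Equiv _ _).symm ⟨p, (congrArg (· ≫ p) (twoTerm_d i)).trans w⟩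

lemma quasiIsoAt_zero_twoTermπ {i : K ⟶ F} {p : F ⟶ M} (w : i ≫ p = 0) [Epi p]
    (ex : (ShortComplex.mk i p w).Exact) : QuasiIsoAt (twoTermπ w) 0 := by
  rw [ChainComplex.quasiIsoAt₀_iff, ShortComplex.quasiIso_iff_of_zeros' _ rfl rfl rfl]
  refine (ShortComplex.exact_and_epi_g_iff_of_iso ?_).2 ⟨ex, ‹Epi p›⟩
  refine ShortComplex.isoMk (Iso.refl _) (Iso.refl _) (Iso.refl _) ?_ ?_
  · exact (Category.id_comp i).trans
      ((twoTerm_d i).symm.trans (Category.comp_id ((twoTerm i).d 1 0)).symm)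
  · exact (Category.id_comp p).trans ((ChainComplex.toSingle₀Equiv_symm_apply_f_zero
      (C := twoTerm i) p ((congrArg (· ≫ p) (twoTerm_d i)).trans w)).symm.trans
        (Category.comp_id ((twoTermπ w).f 0)).symm)

/-- The projective resolution `0 ⟶ K ⟶ F` of the cokernel of `K ⟶ F`. -/
def twoTermResolution {i : K ⟶ F} {p : F ⟶ M} (w : i ≫ p = 0) [Projective K] [Projective F]
    [Mono i] [Epi p] (ex : (ShortComplex.mk i p w).Exact) : ProjectiveResolution M where
  complex := twoTerm i
  projective
    | 0 => ‹Projective F›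
    | 1 => ‹Projective K›
    | n + 2 => (isZero_twoTerm_X i n).projective
  π := twoTermπ w
  quasiIso := ⟨fun
    | 0 => quasiIsoAt_zero_twoTermπ w ex
    | n + 1 => (quasiIsoAt_iff_exactAt' _ _ (ChainComplex.exactAt_succ_single_obj _ n)).2
        (twoTerm_exactAt_succ i n)⟩

end TwoTermResolution

section HomologyOne

variable {D : Type*} [Category* D] [Abelian D]

/-- The inclusion `H₁(L) ⟶ L₁` for a complex `L` with zero differential `L₂ ⟶ L₁`. -/
def homologyOneι (L : ChainComplex D ℕ) (h : L.d 2 1 = 0) : L.homology 1 ⟶ L.X 1 :=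
  (L.isoHomologyπ 2 1 (by simp) h).inv ≫ L.iCycles 1

lemma homologyπ_homologyOneι (L : ChainComplex D ℕ) (h : L.d 2 1 = 0) :
    L.homologyπ 1 ≫ homologyOneι L h = L.iCycles 1 :=
  L.isoHomologyπ_hom_inv_id_assoc 2 1 (by simp) h _

lemma homologyOneι_comp_d (L : ChainComplex D ℕ) (h : L.d 2 1 = 0) :
    homologyOneι L h ≫ L.d 1 0 = 0 := by
  rw [homologyOneι, Category.assoc, L.iCycles_d, comp_zero]

/-- The inclusion `H₁(L) ⟶ L₁` is the kernel of `L₁ ⟶ L₀`. -/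
def homologyOneIsKernel (L : ChainComplex D ℕ) (h : L.d 2 1 = 0) :
    IsLimit (KernelFork.ofι (homologyOneι L h) (homologyOneι_comp_d L h)) :=
  IsLimit.ofIsoLimit (L.cyclesIsKernel 1 0 (by simp)) <|
    Fork.ext (L.isoHomologyπ 2 1 (by simp) h) (homologyπ_homologyOneι L h)

lemma homologyOneι_naturality {L L' : ChainComplex D ℕ} (φ : L ⟶ L') (h : L.d 2 1 = 0)
    (h' : L'.d 2 1 = 0) :
    HomologicalComplex.homologyMap φ 1 ≫ homologyOneι L' h' = homologyOneι L h ≫ φ.f 1 := by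
  rw [← cancel_epi (L.homologyπ 1), HomologicalComplex.homologyπ_naturality_assoc,
    homologyπ_homologyOneι, HomologicalComplex.cyclesMap_i, ← homologyπ_homologyOneι L h,
    Category.assoc]

end HomologyOne

section LeftDerivedOne

lemma mapHomologicalComplex_obj_d_eq_zero {C D ι : Type*} [Category* C] [Category* D]
    [Preadditive C] [Preadditive D] {c : ComplexShape ι} (F : C ⥤ D) [F.Additive]
    {L : HomologicalComplex C c} {i j : ι} (h : L.d i j = 0) :
    ((F.mapHomologicalComplex c).obj L).d i j = 0 :=
  (congrArg F.map h).trans (F.map_zero _ _)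

variable {C D : Type*} [Category* C] [Category* D] [Abelian C] [Abelian D] [EnoughProjectives C]
  {M : C} (P : ProjectiveResolution M)

/-- The isomorphism `L₁F(M) ≅ H₁(F(P))`. -/
def leftDerivedOneIso (F : C ⥤ D) [F.Additive] :
    (F.leftDerived 1).obj M ≅ ((F.mapHomologicalComplex _).obj P.complex).homology 1 :=
  P.isoLeftDerivedObj F 1

lemma leftDerivedOneIso_hom_naturality {F G : C ⥤ D} [F.Additive] [G.Additive] (α : F ⟶ G) :
    (NatTrans.leftDerived α 1).app M ≫ (leftDerivedOneIso P G).hom = (leftDerivedOneIso P F).hom ≫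
      HomologicalComplex.homologyMap ((NatTrans.mapHomologicalComplex α _).app P.complex) 1 := by
  rw [← Iso.eq_comp_inv, Category.assoc]
  exact P.leftDerived_app_eq α 1

variable (hP : P.complex.d 2 1 = 0)

/-- The inclusion `L₁F(M) ⟶ F(P₁)` for a projective resolution `P` of `M` with zero differential
`P₂ ⟶ P₁`. -/
def leftDerivedOneι (F : C ⥤ D) [F.Additive] :
    (F.leftDerived 1).obj M ⟶ ((F.mapHomologicalComplex _).obj P.complex).X 1 :=
  (leftDerivedOneIso P F).hom ≫ homologyOneι _ (mapHomologicalComplex_obj_d_eq_zero F hP)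

lemma leftDerivedOneι_comp_d (F : C ⥤ D) [F.Additive] :
    leftDerivedOneι P hP F ≫ ((F.mapHomologicalComplex _).obj P.complex).d 1 0 = 0 := by
  rw [leftDerivedOneι, Category.assoc, homologyOneι_comp_d, comp_zero]

/-- The inclusion `L₁F(M) ⟶ F(P₁)` is the kernel of `F(P₁) ⟶ F(P₀)`. -/
def leftDerivedOneIsKernel (F : C ⥤ D) [F.Additive] : IsLimit
    (KernelFork.ofι (leftDerivedOneι P hP F) (leftDerivedOneι_comp_d P hP F)) :=
  IsLimit.ofIsoLimit (homologyOneIsKernel _ _) <|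
    Fork.ext (leftDerivedOneIso P F).symm ((leftDerivedOneIso P F).inv_hom_id_assoc _)

lemma leftDerivedOneι_naturality {F G : C ⥤ D} [F.Additive] [G.Additive] (α : F ⟶ G) :
    (NatTrans.leftDerived α 1).app M ≫ leftDerivedOneι P hP G =
      leftDerivedOneι P hP F ≫ ((NatTrans.mapHomologicalComplex α _).app P.complex).f 1 := by
  rw [leftDerivedOneι, ← Category.assoc, leftDerivedOneIso_hom_naturality, Category.assoc,
    homologyOneι_naturality, ← Category.assoc, leftDerivedOneι]

end LeftDerivedOne

section CokernelPresentation

universe v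
variable {C : Type*} [Category.{v} C] {B : Type*} [Ring B]

/-- A presentation of a module-valued functor `E` as the cokernel of the map
`Hom(F, -) ⟶ Hom(K, -)` induced by `i : K ⟶ F`. -/
structure CokernelPresentation [Preadditive C] (E : C ⥤ ModuleCat.{v} B) {K F : C} (i : K ⟶ F) where
  proj (Y : C) : (K ⟶ Y) →+ E.obj Y
  proj_surjective (Y : C) : Function.Surjective (proj Y)
  map_proj {Y Z : C} (g : Y ⟶ Z) (f : K ⟶ Y) : E.map g (proj Y f) = proj Z (f ≫ g)
  proj_eq_zero_iff {Y : C} (f : K ⟶ Y) : proj Y f = 0 ↔ ∃ g : F ⟶ Y, i ≫ g = f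

variable [Abelian C] [EnoughProjectives C] {M : C}

/-- A projective resolution `P` of `M` with zero differential `P₂ ⟶ P₁` presents `Ext¹(M, -)` as
the cokernel of `Hom(P₀, -) ⟶ Hom(P₁, -)`. -/
def extPresentation (A : Type*) [Ring A] [Linear A C] (P : ProjectiveResolution M)
    (hP : P.complex.d 2 1 = 0) :
    CokernelPresentation ((Ext A C 1).obj (op M)) (P.complex.d 1 0) where
  proj Y := (leftDerivedOneι P hP ((linearYoneda A C).obj Y).rightOp).unop.hom.toAddMonoidHom
  proj_surjective Y := by
    have : Mono (leftDerivedOneι P hP ((linearYoneda A C).obj Y).rightOp) :=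
      mono_of_isLimit_fork (leftDerivedOneIsKernel P hP _)
    exact (ModuleCat.epi_iff_surjective _).1 (unop_epi_of_mono _)
  map_proj g f := congr(Quiver.Hom.unop $(leftDerivedOneι_naturality P hP
    (NatTrans.rightOp ((linearYoneda A C).map g))) f)
  proj_eq_zero_iff {Y} f := by
    have h : (ShortComplex.mk _ _ (leftDerivedOneι_comp_d P hP _)).Exact :=
      ShortComplex.exact_of_f_is_kernel _
        (leftDerivedOneIsKernel P hP ((linearYoneda A C).obj Y).rightOp)
    exact (SetLike.ext_iff.1 h.unop.moduleCat_range_eq_ker f).symm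

/-- A short exact sequence `0 ⟶ K ⟶ F ⟶ M ⟶ 0` with `K` and `F` projective presents `Ext¹(M, -)`
as the cokernel of `Hom(F, -) ⟶ Hom(K, -)`. -/
def extPresentationOfExact (A : Type*) [Ring A] [Linear A C] {K F : C} {i : K ⟶ F} {p : F ⟶ M}
    (w : i ≫ p = 0) [Projective K] [Projective F] [Mono i] [Epi p]
    (ex : (ShortComplex.mk i p w).Exact) : CokernelPresentation ((Ext A C 1).obj (op M)) i :=
  cast (congrArg (CokernelPresentation (K := K) (F := F) _) (twoTerm_d i))
    (extPresentation A (twoTermResolution w ex) ((isZero_twoTerm_X i 0).eq_of_src _ _))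

end CokernelPresentation

section FinitelyPresentable

universe u

attribute [local instance] Cardinal.fact_isRegular_aleph0 in
lemma isFinitelyPresentable_free (A : Type u) [Ring A] (X : Type u) [Finite X] :
    IsFinitelyPresentable.{u} ((ModuleCat.free A).obj X) := by
  have : IsCardinalPresentable X Cardinal.aleph0.{u} :=
    ((hasCardinalLT_aleph0_iff X).2 ‹_›).isCardinalPresentable
  have : (forget (ModuleCat.{u} A)).IsFinitelyAccessible :=
    Functor.isFinitelyAccessible_iff_preservesFilteredColimits.2 inferInstance
  exact (ModuleCat.adj A).isCardinalPresentable_leftAdjoint_obj _ X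

attribute [local instance] Cardinal.fact_isRegular_aleph0 in
lemma isFinitelyPresentable_of_finite_of_projective {A : Type u} [Ring A] (X : ModuleCat.{u} A)
    [Module.Finite A X] [Module.Projective A X] : IsFinitelyPresentable.{u} X := by
  obtain ⟨t, ht⟩ := Module.Finite.fg_top (R := A) (M := X)
  let s : ModuleCat.of A (t →₀ A) ⟶ X :=
    ModuleCat.ofHom (Finsupp.linearCombination A Subtype.val)
  have hs : Function.Surjective s.hom := by
    rw [← LinearMap.range_eq_top, ModuleCat.hom_ofHom, Finsupp.range_linearCombination]
    simpa using ht
  obtain ⟨r, hr⟩ := Module.projective_lifting_property s.hom LinearMap.id hs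
  have := isFinitelyPresentable_free A t
  have hX : Retract X ((ModuleCat.free A).obj t) := ⟨ModuleCat.ofHom r, s, ModuleCat.hom_ext hr⟩
  exact hX.isCardinalPresentable _

end FinitelyPresentable

section PreservesFilteredColimits

universe w
variable {C : Type*} [Category.{w} C] [Preadditive C] {B : Type w} [Ring B]
  {E : C ⥤ ModuleCat.{w} B} {K F : C} {i : K ⟶ F}

namespace CokernelPresentation

lemma exists_map_ι_eq (Q : CokernelPresentation E i) [IsFinitelyPresentable.{w} K]
    {J : Type w} [SmallCategory J] [IsFiltered J] {D : J ⥤ C} {c : Cocone D} (hc : IsColimit c)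
    (x : E.obj c.pt) : ∃ (j : J) (y : E.obj (D.obj j)), E.map (c.ι.app j) y = x := by
  obtain ⟨f, rfl⟩ := Q.proj_surjective c.pt x
  obtain ⟨j, g, rfl⟩ := IsFinitelyPresentable.exists_hom_of_isColimit hc f
  exact ⟨j, Q.proj _ g, Q.map_proj _ _⟩

lemma exists_map_eq_zero (Q : CokernelPresentation E i) [IsFinitelyPresentable.{w} K]
    [IsFinitelyPresentable.{w} F] {J : Type w} [SmallCategory J] [IsFiltered J] {D : J ⥤ C}
    {c : Cocone D} (hc : IsColimit c) {j : J} (x : E.obj (D.obj j))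
    (hx : E.map (c.ι.app j) x = 0) : ∃ (k : J) (u : j ⟶ k), E.map (D.map u) x = 0 := by
  obtain ⟨f, rfl⟩ := Q.proj_surjective _ x
  rw [Q.map_proj, Q.proj_eq_zero_iff] at hx
  obtain ⟨g, hg⟩ := hx
  obtain ⟨l, g', rfl⟩ := IsFinitelyPresentable.exists_hom_of_isColimit hc g
  obtain ⟨k, u, v, h⟩ := IsFinitelyPresentable.exists_eq_of_isColimit hc f (i ≫ g')
    (by rw [Category.assoc, hg])
  exact ⟨k, u, by rw [Q.map_proj, Q.proj_eq_zero_iff]; exact ⟨g' ≫ D.map v, by simp [h]⟩⟩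

lemma preservesColimitsOfShape (Q : CokernelPresentation E i) [IsFinitelyPresentable.{w} K]
    [IsFinitelyPresentable.{w} F] (J : Type w) [SmallCategory J] [IsFiltered J] :
    PreservesColimitsOfShape J E := by
  refine ⟨fun {D} => ⟨fun {c} hc => ⟨isColimitOfReflects (forget (ModuleCat.{w} B)) ?_⟩⟩⟩
  refine Types.FilteredColimit.isColimitOf' _ _ (fun x => ?_) (fun j x y hxy => ?_)
  · obtain ⟨j, y, hy⟩ := Q.exists_map_ι_eq hc x
    exact ⟨j, y, hy.symm⟩
  · obtain ⟨k, u, hu⟩ := Q.exists_map_eq_zero hc (x - y)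
      ((map_sub (E.map (c.ι.app j)).hom x y).trans (sub_eq_zero.2 hxy))
    exact ⟨k, u, sub_eq_zero.1 ((map_sub (E.map (D.map u)).hom x y).symm.trans hu)⟩

end CokernelPresentation

end PreservesFilteredColimits

section PresentationOperations

universe v
variable {C : Type*} [Category.{v} C] [Preadditive C] {B : Type*} [Ring B]
  {E : C ⥤ ModuleCat.{v} B} {K F G : C} {i : K ⟶ F}

namespace CokernelPresentation

lemma additive (Q : CokernelPresentation E i) : E.Additive where
  map_add {Y Z g g'} := by
    ext x
    obtain ⟨f, rfl⟩ := Q.proj_surjective Y x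
    change E.map (g + g') _ = E.map g _ + E.map g' _
    simp only [Q.map_proj, Preadditive.comp_add, map_add]

/-- Enlarging `F` to an object of which it is a direct summand does not change the cokernel of
`Hom(F, -) ⟶ Hom(K, -)`. -/
def ofCompSplitMono {a : F ⟶ G} (Q : CokernelPresentation E (i ≫ a)) [IsSplitMono a] :
    CokernelPresentation E i where
  proj := Q.proj
  proj_surjective := Q.proj_surjective
  map_proj := Q.map_proj
  proj_eq_zero_iff f := (Q.proj_eq_zero_iff f).trans
    ⟨fun ⟨g, hg⟩ => ⟨a ≫ g, by rw [← hg, Category.assoc]⟩,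
      fun ⟨g, hg⟩ => ⟨retraction a ≫ g, by simp [hg]⟩⟩

end CokernelPresentation

end PresentationOperations

section SumsFromFilteredColimits

universe w
open CoproductsFromFiniteFiltered

variable {C D : Type*} [Category* C] [Category* D] [HasFiniteCoproducts C] {ι : Type w}
  {X : ι → C}

/-- The coproduct of the members of a family that are indexed by a finite set. -/
abbrev subcoproduct (X : ι → C) (S : Finset (Discrete ι)) : C :=
  (liftToFinsetObj (Discrete.functor X)).obj S

/-- The inclusion of a summand in the coproduct indexed by a finite set. -/
def subcoproductι (X : ι → C) (S : Finset (Discrete ι)) (x : S) : X x.1.as ⟶ subcoproduct X S :=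
  Sigma.ι (fun x : S => X x.1.as) x

lemma subcoproductι_map {S T : Finset (Discrete ι)} (u : S ⟶ T) (x : S) :
    subcoproductι X S x ≫ (liftToFinsetObj (Discrete.functor X)).map u =
      subcoproductι X T ⟨x, leOfHom u x.2⟩ :=
  Sigma.ι_desc _ x

/-- The map from the coproduct indexed by a finite set to the full coproduct. -/
def subcoproductToSigma (X : ι → C) [HasCoproduct X] (S : Finset (Discrete ι)) :
    subcoproduct X S ⟶ ∐ X :=
  (finiteSubcoproductsCocone X).ι.app S

lemma subcoproductι_toSigma [HasCoproduct X] (S : Finset (Discrete ι)) (x : S) :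
    subcoproductι X S x ≫ subcoproductToSigma X S = Sigma.ι X x.1.as :=
  Sigma.ι_desc _ x

variable (E : C ⥤ D) [PreservesFiniteCoproducts E] {Z : D}

/-- A functor commuting with finite coproducts sends `∐_{x ∈ S} X x` to the coproduct of the
`E (X x)`. -/
def isColimitMapSubcoproduct (X : ι → C) (S : Finset (Discrete ι)) :
    IsColimit (Cofan.mk _ fun x => E.map (subcoproductι X S x)) :=
  isColimitOfHasCoproductOfPreservesColimit E fun x : S => X x.1.as

variable {E} in
lemma mapSubcoproduct_hom_ext {S : Finset (Discrete ι)} {f g : E.obj (subcoproduct X S) ⟶ Z}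
    (h : ∀ x, E.map (subcoproductι X S x) ≫ f = E.map (subcoproductι X S x) ≫ g) : f = g :=
  Cofan.IsColimit.hom_ext (isColimitMapSubcoproduct E X S) f g h

/-- The map `E (∐_{x ∈ S} X x) ⟶ Z` induced by maps `E (X x) ⟶ Z`. -/
def mapSubcoproductDesc (f : ∀ x, E.obj (X x) ⟶ Z) (S : Finset (Discrete ι)) :
    E.obj (subcoproduct X S) ⟶ Z :=
  Cofan.IsColimit.desc (isColimitMapSubcoproduct E X S) fun x => f x.1.as

lemma map_subcoproductι_desc (f : ∀ x, E.obj (X x) ⟶ Z) (S : Finset (Discrete ι)) (x : S) :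
    E.map (subcoproductι X S x) ≫ mapSubcoproductDesc E f S = f x.1.as :=
  Cofan.IsColimit.fac (isColimitMapSubcoproduct E X S) _ x

/-- The cocone over `S ↦ E (∐_{x ∈ S} X x)` induced by maps `E (X x) ⟶ Z`. -/
def mapSubcoproductsCocone (f : ∀ x, E.obj (X x) ⟶ Z) :
    Cocone (liftToFinsetObj (Discrete.functor X) ⋙ E) where
  pt := Z
  ι.app := mapSubcoproductDesc E f
  ι.naturality S T u := by
    refine (mapSubcoproduct_hom_ext fun x => ?_).trans (Category.comp_id _).symm
    rw [Functor.comp_map, ← E.map_comp_assoc, subcoproductι_map, map_subcoproductι_desc,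
      map_subcoproductι_desc]

variable [HasCoproduct X] [HasColimitsOfShape (Finset (Discrete ι)) C]
  [PreservesColimitsOfShape (Finset (Discrete ι)) E]

variable {E} in
lemma mapSigma_hom_ext {f g : E.obj (∐ X) ⟶ Z}
    (h : ∀ x, E.map (Sigma.ι X x) ≫ f = E.map (Sigma.ι X x) ≫ g) : f = g := by
  have hS (S : Finset (Discrete ι)) :
      E.map (subcoproductToSigma X S) ≫ f = E.map (subcoproductToSigma X S) ≫ g :=
    mapSubcoproduct_hom_ext fun x => by
      simpa only [← E.map_comp_assoc, subcoproductι_toSigma] using h x.1.as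
  exact (isColimitOfPreserves E (isColimitFiniteSubproductsCocone X)).hom_ext hS

/-- The map `E (∐ X) ⟶ Z` induced by maps `E (X x) ⟶ Z`. -/
def mapSigmaDesc (f : ∀ x, E.obj (X x) ⟶ Z) : E.obj (∐ X) ⟶ Z :=
  (isColimitOfPreserves E (isColimitFiniteSubproductsCocone X)).desc (mapSubcoproductsCocone E f)

lemma map_toSigma_mapSigmaDesc (f : ∀ x, E.obj (X x) ⟶ Z) (S : Finset (Discrete ι)) :
    E.map (subcoproductToSigma X S) ≫ mapSigmaDesc E f = mapSubcoproductDesc E f S :=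
  (isColimitOfPreserves E (isColimitFiniteSubproductsCocone X)).fac (mapSubcoproductsCocone E f) S

lemma map_ι_mapSigmaDesc (f : ∀ x, E.obj (X x) ⟶ Z) (x : ι) :
    E.map (Sigma.ι X x) ≫ mapSigmaDesc E f = f x := by
  let x' : ({⟨x⟩} : Finset (Discrete ι)) := ⟨⟨x⟩, by simp⟩
  have h : subcoproductι X _ x' ≫ subcoproductToSigma X _ = Sigma.ι X x :=
    subcoproductι_toSigma _ x'
  rw [← h, E.map_comp_assoc, map_toSigma_mapSigmaDesc, map_subcoproductι_desc]

lemma preservesColimitsOfShape_discrete [HasColimitsOfShape (Discrete ι) C] :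
    PreservesColimitsOfShape (Discrete ι) E :=
  have (X : ι → C) : PreservesColimit (Discrete.functor X) E :=
    preservesColimit_of_preserves_colimit_cocone (coproductIsCoproduct X) <|
      (isColimitMapCoconeCofanMkEquiv _ _ _).symm <|
        Cofan.IsColimit.mk _ (fun s => mapSigmaDesc E s.inj) (fun s => map_ι_mapSigmaDesc E s.inj)
          fun s _ hm => mapSigma_hom_ext fun x => (hm x).trans (map_ι_mapSigmaDesc E s.inj x).symm
  preservesColimitsOfShape_of_discrete E

end SumsFromFilteredColimits

section FGRange

universe u v
variable {A : Type u} [Ring A]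

/-- The morphisms of modules whose range is contained in a finitely generated submodule. -/
def fgRangeHom (X Y : ModuleCat.{v} A) : AddSubgroup (X ⟶ Y) where
  carrier := {f | ∃ L : Submodule A Y, L.FG ∧ LinearMap.range f.hom ≤ L}
  zero_mem' := ⟨⊥, Submodule.fg_bot, LinearMap.range_zero.le⟩
  add_mem' := by
    rintro f g ⟨L, hL, hf⟩ ⟨L', hL', hg⟩
    exact ⟨L ⊔ L', hL.sup hL', (LinearMap.range_add_le _ _).trans (sup_le_sup hf hg)⟩
  neg_mem' := by
    rintro f ⟨L, hL, hf⟩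
    exact ⟨L, hL, (LinearMap.range_neg f.hom).le.trans hf⟩

lemma comp_mem_fgRangeHom {X Y Z : ModuleCat.{v} A} {f : X ⟶ Y} (hf : f ∈ fgRangeHom X Y)
    (g : Y ⟶ Z) : f ≫ g ∈ fgRangeHom X Z := by
  obtain ⟨L, hL, hfL⟩ := hf
  exact ⟨L.map g.hom, hL.map _, (LinearMap.range_comp _ _).trans_le (Submodule.map_mono hfL)⟩

lemma comp_mem_fgRangeHom_of_finite {X Y Z : ModuleCat.{v} A} [Module.Finite A Y] (f : X ⟶ Y)
    (g : Y ⟶ Z) : f ≫ g ∈ fgRangeHom X Z :=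
  comp_mem_fgRangeHom ⟨⊤, Module.Finite.fg_top, le_top⟩ g

lemma iSup_range_sigma_ι {ι : Type*} (X : ι → ModuleCat.{v} A) [HasCoproduct X] :
    ⨆ j, LinearMap.range (Sigma.ι X j).hom = ⊤ := by
  let W := ⨆ j, LinearMap.range (Sigma.ι X j).hom
  have hW : ModuleCat.ofHom W.mkQ = 0 := Sigma.hom_ext _ _ fun j => by
    ext x
    simpa using (le_iSup (fun j => LinearMap.range (Sigma.ι X j).hom) j) ⟨x, rfl⟩
  exact W.ker_mkQ.symm.trans (LinearMap.ker_eq_top.2 congr($(hW).hom))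

variable {B : Type*} [Ring B] {E : ModuleCat.{v} A ⥤ ModuleCat.{v} B}
  {K F : ModuleCat.{v} A} {i : K ⟶ F}

lemma CokernelPresentation.exists_mem_fgRangeHom (Q : CokernelPresentation E i) {ι : Type*}
    (X : ι → ModuleCat.{v} A) [HasCoproduct X] [HasCoproduct fun j => E.obj (X j)]
    [∀ j, Module.Finite A (X j)] (hd : Function.Surjective (sigmaComparison E X))
    (z : E.obj (∐ X)) : ∃ f ∈ fgRangeHom K (∐ X), Q.proj _ f = z := by
  obtain ⟨y, rfl⟩ := hd z
  have hy : y ∈ ⨆ j, LinearMap.range (Sigma.ι (fun j => E.obj (X j)) j).hom :=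
    (iSup_range_sigma_ι _).ge Submodule.mem_top
  change sigmaComparison E X y ∈ (fgRangeHom K (∐ X)).map (Q.proj (∐ X))
  induction hy using Submodule.iSup_induction' with
  | mem j y hy =>
    obtain ⟨x, rfl⟩ := hy
    obtain ⟨f, rfl⟩ := Q.proj_surjective _ x
    refine ⟨f ≫ Sigma.ι X j, comp_mem_fgRangeHom_of_finite f _, ?_⟩
    rw [← Q.map_proj, ← ι_comp_sigmaComparison]
    rfl
  | zero => simp
  | add y y' _ _ hy hy' => simpa using add_mem hy hy'

lemma CokernelPresentation.exists_mem_fgRangeHom_of_retract (Q : CokernelPresentation E i)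
    {ι : Type*} (X : ι → ModuleCat.{v} A) [HasCoproduct X] [HasCoproduct fun j => E.obj (X j)]
    [∀ j, Module.Finite A (X j)] (hd : Function.Surjective (sigmaComparison E X))
    (ρ : Retract K (∐ X)) : ∃ φ ∈ fgRangeHom K K, Q.proj K φ = Q.proj K (𝟙 K) := by
  obtain ⟨f, hf, hfρ⟩ := Q.exists_mem_fgRangeHom X hd (Q.proj _ ρ.i)
  refine ⟨f ≫ ρ.r, comp_mem_fgRangeHom hf _, ?_⟩
  rw [← Q.map_proj, hfρ, Q.map_proj, ρ.retract]

lemma nonempty_retract_sigma (K X : ModuleCat.{v} A) [HasCoproduct fun _ : K => X]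
    [Module.Projective A K] (hX : ∀ k : K, ∃ (t : X ⟶ K) (x : X), t x = k) :
    Nonempty (Retract K (∐ fun _ : K => X)) := by
  choose t x hx using hX
  have ht : Function.Surjective (Sigma.desc t) := fun k =>
    ⟨Sigma.ι (fun _ : K => X) k (x k), by rw [← ModuleCat.comp_apply, Sigma.ι_desc, hx]⟩
  obtain ⟨r, hr⟩ := Module.projective_lifting_property (Sigma.desc t).hom LinearMap.id ht
  exact ⟨⟨ModuleCat.ofHom r, Sigma.desc t, ModuleCat.hom_ext hr⟩⟩

end FGRange

section Decomposition

universe u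
variable {A : Type u} [Ring A]

/-- `φ` and the identity differ by the restriction of a map `h : F ⟶ ker p`, where `F` is the free
module on `X`; subtracting `h` from the identity of `F` gives an endomorphism over `M` which agrees
with `φ` on `ker p`. -/
lemma exists_iso_biprod_of_proj_eq [IsLeftHereditary A] {X : Type u} {M : ModuleCat.{u} A}
    {p : (X →₀ A) →ₗ[A] M} (hp : Function.Surjective p) {B : Type*} [Ring B]
    {E : ModuleCat.{u} A ⥤ ModuleCat.{u} B}
    (Q : CokernelPresentation E (ModuleCat.ofHom (LinearMap.ker p).subtype))
    {φ : ModuleCat.of A (LinearMap.ker p) ⟶ ModuleCat.of A (LinearMap.ker p)}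
    (hφ : φ ∈ fgRangeHom _ _) (hφ1 : Q.proj _ φ = Q.proj _ (𝟙 _)) :
    ∃ N P : ModuleCat.{u} A, Module.FinitePresentation A N ∧ Projective P ∧
      Nonempty (M ≅ N ⊞ P) := by
  obtain ⟨L, hL, hφL⟩ := hφ
  obtain ⟨h, hh⟩ := (Q.proj_eq_zero_iff (𝟙 _ - φ)).1 (by rw [map_sub, hφ1, sub_self])
  have hh' (k : LinearMap.ker p) : h.hom k.1 = k - φ.hom k := congr($(hh).hom k)
  let ψ : (X →₀ A) →ₗ[A] (X →₀ A) := LinearMap.id - (LinearMap.ker p).subtype ∘ₗ h.hom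
  have hψ (k : LinearMap.ker p) : ψ k = φ.hom k := by
    simp [ψ, hh' k]
  have hpψ : p ∘ₗ ψ = p := LinearMap.ext fun x => by
    simp [ψ]
  obtain ⟨N, Y, P, hN, hP, ⟨e⟩⟩ := exists_linearEquiv_prod_of_endomorphism hp
    (hL.map (LinearMap.ker p).subtype) (Submodule.map_subtype_le _ L) ψ hpψ
    fun k hk => ⟨φ.hom ⟨k, hk⟩, hφL ⟨_, rfl⟩, (hψ ⟨k, hk⟩).symm⟩
  exact ⟨ModuleCat.of A N, ModuleCat.of A P, hN,
    (ModuleCat.of A P).projective_of_categoryTheory_projective,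
    ⟨e.toModuleIso ≪≫ (ModuleCat.biprodIsoProd (.of A N) (.of A P)).symm⟩⟩

end Decomposition

section HereditaryRing

universe u
variable {A : Type u} [Ring A] {M : ModuleCat.{u} A}

/-- The presentation of `Ext¹(M, -)` given by a short exact sequence `0 ⟶ K ⟶ F ⟶ M ⟶ 0` of
modules with `K` and `F` projective. -/
def extPresentationOfRangeEqKer (B : Type*) [Ring B] [Linear B (ModuleCat.{u} A)]
    {K F : ModuleCat.{u} A} {i : K ⟶ F} {p : F ⟶ M}
    [Module.Projective A K] [Module.Projective A F] (hi : Function.Injective i)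
    (hp : Function.Surjective p) (h : LinearMap.range i.hom = LinearMap.ker p.hom) :
    CokernelPresentation ((Ext B (ModuleCat.{u} A) 1).obj (op M)) i :=
  have : Mono i := (ModuleCat.mono_iff_injective i).2 hi
  have : Epi p := (ModuleCat.epi_iff_surjective p).2 hp
  have : Projective K := K.projective_of_categoryTheory_projective
  have : Projective F := F.projective_of_categoryTheory_projective
  extPresentationOfExact B (ModuleCat.hom_ext (LinearMap.range_le_ker_iff.1 h.le))
    ((ShortComplex.moduleCat_exact_iff_range_eq_ker _).2 h)

lemma range_inl_comp_subtype_ker {F N P M : Type*} [AddCommGroup F] [Module A F] [AddCommGroup N]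
    [Module A N] [AddCommGroup P] [Module A P] [AddCommGroup M] [Module A M] (s : F →ₗ[A] N)
    (e : (N × P) ≃ₗ[A] M) : LinearMap.range (LinearMap.inl A F P ∘ₗ (LinearMap.ker s).subtype) =
      LinearMap.ker (e.toLinearMap ∘ₗ s.prodMap LinearMap.id) := by
  rw [LinearEquiv.ker_comp, LinearMap.ker_prodMap, LinearMap.ker_id, LinearMap.range_comp,
    Submodule.range_subtype, Submodule.map_inl]

variable [IsLeftHereditary A]

/-- The presentation of `Ext¹(M, -)` given by the kernel of a map from a projective module onto
`M`. -/
def extPresentationOfSurjective (B : Type*) [Ring B] [Linear B (ModuleCat.{u} A)]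
    {F : Type u} [AddCommGroup F] [Module A F] [Module.Projective A F] {p : F →ₗ[A] M}
    (hp : Function.Surjective p) : CokernelPresentation ((Ext B (ModuleCat.{u} A) 1).obj (op M))
      (ModuleCat.ofHom (LinearMap.ker p).subtype) :=
  extPresentationOfRangeEqKer B (p := ModuleCat.ofHom p) Subtype.val_injective hp
    (LinearMap.ker p).range_subtype

lemma exists_finite_presentation_of_iso_biprod (B : Type*) [Ring B] [Linear B (ModuleCat.{u} A)]
    {N P : ModuleCat.{u} A} [Module.FinitePresentation A N] [Projective P] (e : M ≅ N ⊞ P) :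
    ∃ (K F : ModuleCat.{u} A) (i : K ⟶ F),
      Module.Finite A K ∧ Module.Projective A K ∧ Module.Finite A F ∧ Module.Projective A F ∧
        Nonempty (CokernelPresentation ((Ext B (ModuleCat.{u} A) 1).obj (op M)) i) := by
  have : Module.Projective A P := P.projective_of_module_projective
  obtain ⟨n, s, hs⟩ := Module.Finite.exists_fin' A N
  have : Module.Finite A (LinearMap.ker s) :=
    Module.Finite.iff_fg.2 (Module.FinitePresentation.fg_ker s hs)
  let e' : (N × P) ≃ₗ[A] M := (e ≪≫ ModuleCat.biprodIsoProd N P).symm.toLinearEquiv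
  let i : ModuleCat.of A (LinearMap.ker s) ⟶ ModuleCat.of A (Fin n → A) :=
    ModuleCat.ofHom (LinearMap.ker s).subtype
  let a : ModuleCat.of A (Fin n → A) ⟶ ModuleCat.of A ((Fin n → A) × P) :=
    ModuleCat.ofHom (LinearMap.inl A _ _)
  let p : ModuleCat.of A ((Fin n → A) × P) ⟶ M :=
    ModuleCat.ofHom (e'.toLinearMap ∘ₗ s.prodMap LinearMap.id)
  have : IsSplitMono a := ⟨⟨ModuleCat.ofHom (LinearMap.fst A _ _), rfl⟩⟩
  let Q : CokernelPresentation ((Ext B (ModuleCat.{u} A) 1).obj (op M)) (i ≫ a) :=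
    extPresentationOfRangeEqKer B (p := p)
      (LinearMap.inl_injective.comp Subtype.val_injective)
      (e'.surjective.comp (hs.prodMap Function.surjective_id)) (range_inl_comp_subtype_ker s e')
  exact ⟨_, _, i, inferInstance, inferInstance, inferInstance, inferInstance,
    ⟨Q.ofCompSplitMono⟩⟩

end HereditaryRing

section RightModules

variable {R : Type} [Ring R] {M : RMod R}

instance : Module.Finite Rᵐᵒᵖ (regR R) :=
  Module.Finite.equiv (MulOpposite.opLinearEquiv Rᵐᵒᵖ : R ≃ₗ[Rᵐᵒᵖ] Rᵐᵒᵖ).symm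

/-- The homomorphism `R ⟶ K`, `r ↦ k r`, of right modules determined by an element `k` of `K`. -/
def regRHom {K : RMod R} (k : K) : regR R ⟶ K :=
  ModuleCat.ofHom
    { toFun := fun r => MulOpposite.op (show R from r) • k
      map_add' := fun x y => add_smul (MulOpposite.op (show R from x)) (MulOpposite.op y) k
      map_smul' := fun s x => mul_smul s (MulOpposite.op (show R from x)) k }

lemma CommutesWithDirectSums.commutesWithSumsOfR (h : CommutesWithDirectSums R M) :
    CommutesWithSumsOfR R 1 M := fun ι => by
  have := h ι
  exact (inferInstance : IsIso (sigmaComparison (extFun R 1 M) fun _ : ι => regR R))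

variable [IsLeftHereditary Rᵐᵒᵖ]

lemma CommutesWithDirectLimits.commutesWithDirectSums (h : CommutesWithDirectLimits R M) :
    CommutesWithDirectSums R M := fun ι => by
  have := (extPresentationOfSurjective ℤ (Finsupp.linearCombination_surjective Rᵐᵒᵖ
    (Function.surjective_id (α := M)))).additive
  have := h (Finset (Discrete ι))
  exact preservesColimitsOfShape_discrete (extFun R 1 M)

lemma CommutesWithSumsOfR.exists_iso_biprod (h : CommutesWithSumsOfR R 1 M) :
    ∃ N P : RMod R, Module.FinitePresentation Rᵐᵒᵖ N ∧ Projective P ∧ Nonempty (M ≅ N ⊞ P) := by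
  have hp := Finsupp.linearCombination_surjective Rᵐᵒᵖ (Function.surjective_id (α := M))
  let K : RMod R := ModuleCat.of _ (LinearMap.ker (Finsupp.linearCombination Rᵐᵒᵖ (id : M → M)))
  let Q := extPresentationOfSurjective ℤ hp
  have hK : Function.Surjective (sigmaComparison (extFun R 1 M) fun _ : K => regR R) :=
    have : IsIso (sigmaComparison (extFun R 1 M) fun _ : K => regR R) := h K
    ((ConcreteCategory.isIso_iff_bijective _).1 this).2
  obtain ⟨ρ⟩ := nonempty_retract_sigma K (regR R) fun k =>
    ⟨regRHom k, (1 : R), one_smul Rᵐᵒᵖ k⟩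
  obtain ⟨φ, hφ, hφ1⟩ := Q.exists_mem_fgRangeHom_of_retract _ hK ρ
  exact exists_iso_biprod_of_proj_eq hp Q hφ hφ1

lemma commutesWithDirectLimits_of_iso_biprod {N P : RMod R} [Module.FinitePresentation Rᵐᵒᵖ N]
    [Projective P] (e : M ≅ N ⊞ P) : CommutesWithDirectLimits R M := fun J _ _ _ => by
  obtain ⟨K, F, i, _, _, _, _, ⟨Q⟩⟩ := exists_finite_presentation_of_iso_biprod ℤ e
  have := isFinitelyPresentable_of_finite_of_projective K
  have := isFinitelyPresentable_of_finite_of_projective F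
  exact Q.preservesColimitsOfShape J

end RightModules

theorem hereditary_ext1_tfae (R : Type) [Ring R]
    (hher : ∀ (I : Ideal Rᵐᵒᵖ), Module.Projective Rᵐᵒᵖ I) (M : RMod R) :
    (CommutesWithDirectLimits R M ↔ CommutesWithDirectSums R M) ∧
    (CommutesWithDirectSums R M ↔ CommutesWithSumsOfR R 1 M) ∧
    (CommutesWithSumsOfR R 1 M ↔
      ∃ (N P : RMod R), Module.FinitePresentation Rᵐᵒᵖ N ∧ Projective P ∧
        Nonempty (M ≅ (N ⊞ P))) := by
  have : IsLeftHereditary Rᵐᵒᵖ := ⟨hher⟩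
  have h₁₂ : CommutesWithDirectLimits R M → CommutesWithDirectSums R M :=
    CommutesWithDirectLimits.commutesWithDirectSums
  have h₂₃ : CommutesWithDirectSums R M → CommutesWithSumsOfR R 1 M :=
    CommutesWithDirectSums.commutesWithSumsOfR
  have h₃₁ : CommutesWithSumsOfR R 1 M → CommutesWithDirectLimits R M := fun h => by
    obtain ⟨N, P, _, _, ⟨e⟩⟩ := h.exists_iso_biprod
    exact commutesWithDirectLimits_of_iso_biprod e
  refine ⟨⟨h₁₂, h₃₁ ∘ h₂₃⟩, ⟨h₂₃, h₁₂ ∘ h₃₁⟩, ⟨CommutesWithSumsOfR.exists_iso_biprod, ?_⟩⟩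
  rintro ⟨N, P, _, _, ⟨e⟩⟩
  exact h₂₃ (h₁₂ (commutesWithDirectLimits_of_iso_biprod e))
end
end
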